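/- arXiv:1111.1428 — 2 statements merged into one kernel-verified Lean document; each statement's English description precedes it below -/
import Mathlib

section
/- Fix P ∈ ℙ^n, zero-dimensional closed subschemes A, B ⊂ ℙ^m with A ≠ B, P ∈ ⟨ν_d(A)⟩ ∩ ⟨ν_d(B)⟩, P ∉ ⟨ν_d(A')⟩ for every A' ⊊ A, P ∉ ⟨ν_d(B')⟩ for every B' ⊊ B, with B reduced; assume there are a positive integer t ≤ d and a degree-t hypersurface D ⊂ ℙ^m with h^1(I_{Res_D(A∪B)}(d−t)) = 0, and set E := B ∖ (B ∩ D). Then ⟨ν_d(A ∩ D)⟩ ∩ ⟨ν_d(B ∩ D)⟩ ≠ ∅, and there is a point Q ∈ ⟨ν_d(A ∩ D)⟩ ∩ ⟨ν_d(B ∩ D)⟩ such that P ∈ ⟨{Q} ∪ ν_d(E)⟩. -/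
open scoped LinearAlgebra.Projectivization

noncomputable section

/-- The polynomial ring in `m+1` variables over `K`: homogeneous coordinate ring of `ℙ^m`. -/
abbrev PR (K : Type) [Field K] (m : ℕ) : Type := MvPolynomial (Fin (m+1)) K

/-- The space of degree-`d` forms in `m+1` variables. -/
abbrev Hd (K : Type) [Field K] (m d : ℕ) : Submodule K (PR K m) :=
  MvPolynomial.homogeneousSubmodule (Fin (m+1)) K d

/-- Projective `m`-space over `K`. -/
abbrev Pm (K : Type) [Field K] (m : ℕ) := ℙ K (Fin (m+1) → K)

/-- The target projective space `ℙ^n`, `n = C(m+d,m) - 1`, of the degree-`d` Veronese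
embedding, realized as the projectivization of the dual of the space of degree-`d` forms
(the space of degree-`d` symmetric tensors). -/
abbrev PN (K : Type) [Field K] (m d : ℕ) := ℙ K (Module.Dual K (Hd K m d))

variable {K : Type} [Field K] {m : ℕ}

/-- Hilbert function of `R/I` in degree `t`. -/
def hilbQ (I : Ideal (PR K m)) (t : ℕ) : ℕ :=
  Module.finrank K ((Hd K m t).map (Ideal.Quotient.mkₐ K I).toLinearMap)

/-- The degree (length) of the projective scheme defined by `I`: the eventual value of the
Hilbert function of `R/I`. -/
def idealDeg (I : Ideal (PR K m)) : ℕ := Filter.limsup (fun t => hilbQ I t) Filter.atTop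

/-- `h^1(𝓘_Z(d))` for the zero-dimensional scheme `Z` with (saturated) ideal `I`:
it equals `deg Z - dim (R/I)_d`. -/
def h1I (I : Ideal (PR K m)) (d : ℕ) : ℕ := idealDeg I - hilbQ I d

/-- An ideal is homogeneous. -/
def IsHomogI (I : Ideal (PR K m)) : Prop :=
  ∀ f ∈ I, ∀ n : ℕ, MvPolynomial.homogeneousComponent n f ∈ I

/-- An ideal is saturated with respect to the irrelevant maximal ideal. -/
def IsSatI (I : Ideal (PR K m)) : Prop :=
  ∀ f : PR K m, (∀ i, MvPolynomial.X i * f ∈ I) → f ∈ I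

/-- A closed subscheme of `ℙ^m`, given by its saturated homogeneous ideal. -/
structure PSub (K : Type) [Field K] (m : ℕ) where
  I : Ideal (PR K m)
  homog : IsHomogI I
  sat : IsSatI I

/-- A (closed sub)scheme is zero-dimensional iff the Hilbert function of `R/I` is bounded. -/
def IsZeroDimI (I : Ideal (PR K m)) : Prop := ∃ C, ∀ t, hilbQ I t ≤ C

/-- A polynomial vanishes at a projective point (every homogeneous component vanishes
at a representative). -/
def vanishesAt (f : PR K m) (a : Pm K m) : Prop :=
  ∀ n : ℕ, MvPolynomial.eval a.rep (MvPolynomial.homogeneousComponent n f) = 0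

/-- Zero locus of an ideal in `ℙ^m`. -/
def pzeroLocus (I : Ideal (PR K m)) : Set (Pm K m) := {a | ∀ f ∈ I, vanishesAt f a}

/-- The (saturated) homogeneous ideal of a set of points of `ℙ^m`. -/
def idealOfSet (S : Set (Pm K m)) : Ideal (PR K m) :=
  Ideal.span {f : PR K m | (∃ n, f.IsHomogeneous n) ∧ ∀ a ∈ S, MvPolynomial.eval a.rep f = 0}

/-- Saturation of a homogeneous ideal: the smallest saturated homogeneous ideal containing it. -/
def satIdeal (J : Ideal (PR K m)) : Ideal (PR K m) := sInf {J' | J ≤ J' ∧ IsHomogI J' ∧ IsSatI J'}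

/-- The scheme defined by the (saturated) ideal `I` is reduced. -/
def IsReducedI (I : Ideal (PR K m)) : Prop := I = idealOfSet (pzeroLocus I)

/-- Connected component of a zero-dimensional scheme at a point `a`: the largest subscheme
supported at `a`, i.e. the `a`-primary component. -/
def componentAt (I : Ideal (PR K m)) (a : Pm K m) : Ideal (PR K m) :=
  sInf {J | I ≤ J ∧ IsHomogI J ∧ IsSatI J ∧ pzeroLocus J ⊆ {a}}

/-- Residual scheme of `Z` with respect to the hypersurface `f = 0`: the colon ideal `(I_Z : f)`. -/
def resIdeal (I : Ideal (PR K m)) (f : PR K m) : Ideal (PR K m) :=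
  Submodule.colon I (Ideal.span {f})

/-- Degree of the scheme-theoretic intersection of the subschemes defined by `I` and `J`. -/
def interDeg (I J : Ideal (PR K m)) : ℕ := idealDeg (I ⊔ J)

/-- The degree-`d` Veronese image of a vector `v`: the evaluation-at-`v` functional on
degree-`d` forms. -/
def nu (d : ℕ) (v : Fin (m+1) → K) : Module.Dual K (Hd K m d) :=
  (MvPolynomial.aeval v).toLinearMap ∘ₗ (Hd K m d).subtype

/-- The linear span of the Veronese image `ν_d(S)` of a set `S` of points of `ℙ^m`. -/
def dualSpan (d : ℕ) (S : Set (Pm K m)) : Submodule K (Module.Dual K (Hd K m d)) :=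
  Submodule.span K ((fun a => nu d a.rep) '' S)

/-- The linear span `⟨ν_d(Z)⟩` of the Veronese image of the subscheme with ideal `I`:
the annihilator of the degree-`d` part of `I`. -/
def schemeSpanSub (I : Ideal (PR K m)) (d : ℕ) : Submodule K (Module.Dual K (Hd K m d)) where
  carrier := {φ | ∀ f : Hd K m d, (f : PR K m) ∈ I → φ f = 0}
  add_mem' := by
    intro a b ha hb f hf
    simp [LinearMap.add_apply, ha f hf, hb f hf]
  zero_mem' := by intro f hf; simp
  smul_mem' := by
    intro c a ha f hf
    simp [LinearMap.smul_apply, ha f hf]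

/-- `P ∈ ⟨ν_d(Z)⟩`, for `Z` the subscheme with ideal `I`. -/
def inSpanI (I : Ideal (PR K m)) (d : ℕ) (P : PN K m d) : Prop := P.rep ∈ schemeSpanSub I d

/-- `P ∈ ⟨ν_d(S)⟩` for a set `S` of points of `ℙ^m`. -/
def inSpanSet (d : ℕ) (S : Set (Pm K m)) (P : PN K m d) : Prop := P.rep ∈ dualSpan d S

/-- `L` is a linear subspace of `ℙ^m`. -/
def IsLinearSub (L : Set (Pm K m)) : Prop :=
  ∃ W : Submodule K (Fin (m+1) → K), L = {a | a.submodule ≤ W}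

/-- `L` is a line of `ℙ^m`. -/
def IsLine (L : Set (Pm K m)) : Prop :=
  ∃ W : Submodule K (Fin (m+1) → K), Module.finrank K W = 2 ∧ L = {a | a.submodule ≤ W}

/-- `L` is a plane of `ℙ^m`. -/
def IsPlane (L : Set (Pm K m)) : Prop :=
  ∃ W : Submodule K (Fin (m+1) → K), Module.finrank K W = 3 ∧ L = {a | a.submodule ≤ W}

/-- `J` is the (saturated homogeneous) ideal of a conic of `ℙ^m`: a degree-2 curve contained
in a plane (possibly reducible). -/
def IsConic (J : Ideal (PR K m)) : Prop :=
  ∃ (W : Submodule K (Fin (m+1) → K)) (q : PR K m),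
    Module.finrank K W = 3 ∧ q.IsHomogeneous 2 ∧
    q ∉ idealOfSet {a : Pm K m | a.submodule ≤ W} ∧
    J = satIdeal (idealOfSet {a : Pm K m | a.submodule ≤ W} ⊔ Ideal.span {q})

/-- The algebra of polynomial functions on a `K`-vector space. -/
def polyFunctions (K V : Type) [Field K] [AddCommGroup V] [Module K V] : Subalgebra K (V → K) :=
  Algebra.adjoin K {g : V → K | ∃ φ : V →ₗ[K] K, g = ⇑φ}

/-- Zariski closure of a subset of a projective space. -/
def zClosure {V : Type} [AddCommGroup V] [Module K V] (T : Set (ℙ K V)) : Set (ℙ K V) :=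
  {P | ∀ F ∈ polyFunctions K V, (∀ Q ∈ T, ∀ c : K, F (c • Q.rep) = 0) →
    ∀ c : K, F (c • P.rep) = 0}

/-- The Veronese variety `X_{m,d} = ν_d(ℙ^m)` as a subset of `PN K m d`. -/
def XSet (K : Type) [Field K] (m d : ℕ) : Set (PN K m d) :=
  {Q | ∃ a : Pm K m, Q.submodule = Submodule.span K {nu d a.rep}}

/-- The image `ν_d(S)` of a set of points of `ℙ^m`, as a subset of `PN K m d`. -/
def nuSet (d : ℕ) (S : Set (Pm K m)) : Set (PN K m d) :=
  {Q | ∃ a ∈ S, Q.submodule = Submodule.span K {nu d a.rep}}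

/-- The rank of a point `P` of `PN` with respect to a subset `Y ⊆ PN`. -/
def rankWrt {m d : ℕ} (Y : Set (PN K m d)) (P : PN K m d) : ℕ :=
  sInf {r | ∃ S : Finset (PN K m d), ↑S ⊆ Y ∧ S.card = r ∧
    P.rep ∈ Submodule.span K (Projectivization.rep '' (S : Set (PN K m d)))}

/-- The `s`-th secant variety of `Y ⊆ PN`: the Zariski closure of the union of the spans
of `s` points of `Y`. -/
def secantWrt {m d : ℕ} (Y : Set (PN K m d)) (s : ℕ) : Set (PN K m d) :=
  zClosure {Q | ∃ S : Finset (PN K m d), ↑S ⊆ Y ∧ S.card ≤ s ∧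
    Q.rep ∈ Submodule.span K (Projectivization.rep '' (S : Set (PN K m d)))}

/-- The border rank of `P` with respect to `Y ⊆ PN`. -/
def brankWrt {m d : ℕ} (Y : Set (PN K m d)) (P : PN K m d) : ℕ :=
  sInf {s | 0 < s ∧ P ∈ secantWrt Y s}

/-- Symmetric rank. -/
def srank {m : ℕ} (d : ℕ) (P : PN K m d) : ℕ := rankWrt (XSet K m d) P

/-- Border rank. -/
def brank {m : ℕ} (d : ℕ) (P : PN K m d) : ℕ := brankWrt (XSet K m d) P

/-- Cactus rank: minimal degree of a zero-dimensional closed subscheme `E ⊂ ℙ^m` with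
`P ∈ ⟨ν_d(E)⟩`. -/
def crank {m : ℕ} (d : ℕ) (P : PN K m d) : ℕ :=
  sInf {c | ∃ Z : PSub K m, IsZeroDimI Z.I ∧ idealDeg Z.I = c ∧ inSpanI Z.I d P}

/-- `σ_{s,r}(X_{m,d})`. -/
def sigmaSet (K : Type) [Field K] (m d s r : ℕ) : Set (PN K m d) :=
  {P | brank d P = s ∧ srank d P = r}

/-- A property `Φ` holds for a general `k`-tuple of points of the linear subspace of `ℙ^m`
determined by `W`. -/
def GenerallyOn (W : Submodule K (Fin (m+1) → K)) (k : ℕ)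
    (Φ : (Fin k → Pm K m) → Prop) : Prop :=
  ∃ w : Fin 3 → W, Submodule.span K (Set.range fun j => (w j : Fin (m+1) → K)) = W ∧
    ∃ F : MvPolynomial (Fin k × Fin 3) K, F ≠ 0 ∧
      ∀ c : Fin k → Fin 3 → K,
        MvPolynomial.eval (fun p => c p.1 p.2) F ≠ 0 →
        ∀ e : Fin k → Pm K m,
          (∀ i, (e i).submodule = Submodule.span K {∑ j, c i j • (w j : Fin (m+1) → K)}) → Φ e

end

section helpers
open MvPolynomial

theorem aux_comp_mul {K : Type} [Field K] {m : ℕ} {k : ℕ} {a : PR K m} (ha : a.IsHomogeneous k)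
    (n : ℕ) (x : PR K m) :
    homogeneousComponent (k + n) (a * x) = a * homogeneousComponent n x := by
  have hs := sum_homogeneousComponent x
  conv_lhs => rw [← hs, Finset.mul_sum, map_sum]
  have : ∀ i ∈ Finset.range (x.totalDegree + 1),
      homogeneousComponent (k + n) (a * homogeneousComponent i x)
        = if i = n then a * homogeneousComponent n x else 0 := by
    intro i _
    rw [homogeneousComponent_of_mem (n := k + i)
      (ha.mul (homogeneousComponent_isHomogeneous i x))]
    by_cases h : i = n
    · subst h; simp
    · have h' : ¬ (k + n = k + i) := by omega
      simp [h, Ne.symm h]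
  rw [Finset.sum_congr rfl this, Finset.sum_ite_eq']
  split_ifs with h
  · rfl
  · rw [homogeneousComponent_eq_zero, mul_zero]
    simpa using h

theorem aux_comp_mul_lt {K : Type} [Field K] {m : ℕ} {k : ℕ} {a : PR K m}
    (ha : a.IsHomogeneous k) {n : ℕ} (hn : n < k) (x : PR K m) :
    homogeneousComponent n (a * x) = 0 := by
  conv_lhs => rw [← sum_homogeneousComponent x, Finset.mul_sum, map_sum]
  refine Finset.sum_eq_zero fun i _ => ?_
  rw [homogeneousComponent_of_mem (n := k + i)
      (ha.mul (homogeneousComponent_isHomogeneous i x)), if_neg (by omega)]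

/-- The homogeneous ideal of a point (with representative `v`). -/
noncomputable def vanI {K : Type} [Field K] {m : ℕ} (v : Fin (m+1) → K) : Ideal (PR K m) :=
  RingHom.ker (aeval (fun i => Polynomial.C (v i) * Polynomial.X) : PR K m →ₐ[K] Polynomial K)

theorem aux_aeval_homog {K : Type} [Field K] {m : ℕ} (v : Fin (m+1) → K) {n : ℕ} {x : PR K m}
    (hx : x.IsHomogeneous n) :
    aeval (fun i => Polynomial.C (v i) * Polynomial.X) x
      = Polynomial.C (eval v x) * Polynomial.X ^ n := by
  rw [aeval_def, eval₂_eq, eval_eq, map_sum, Finset.sum_mul]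
  refine Finset.sum_congr rfl fun s hs => ?_
  have h : ∑ i ∈ s.support, s i = n := by
    have := hx.degree_eq_sum_deg_support hs
    simpa using this.symm
  rw [← h, ← Finset.prod_pow_eq_pow_sum]
  simp only [mul_pow, Finset.prod_mul_distrib, map_mul, map_prod, map_pow]
  simp [mul_assoc, Polynomial.algebraMap_eq]

theorem mem_vanI {K : Type} [Field K] {m : ℕ} (v : Fin (m+1) → K) (x : PR K m) :
    x ∈ vanI v ↔ ∀ n, eval v (homogeneousComponent n x) = 0 := by
  have key : aeval (fun i => Polynomial.C (v i) * Polynomial.X) x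
      = ∑ i ∈ Finset.range (x.totalDegree + 1),
        Polynomial.C (eval v (homogeneousComponent i x)) * (Polynomial.X : Polynomial K) ^ i := by
    conv_lhs => rw [← sum_homogeneousComponent x, map_sum]
    exact Finset.sum_congr rfl fun i _ =>
      aux_aeval_homog v (homogeneousComponent_isHomogeneous i x)
  rw [vanI, RingHom.mem_ker]
  constructor
  · intro h n
    change aeval (fun i => Polynomial.C (v i) * Polynomial.X) x = 0 at h
    rw [key] at h
    have h2 := congrArg (fun p => Polynomial.coeff p n) h
    simp only [Polynomial.finsetSum_coeff, Polynomial.coeff_C_mul_X_pow,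
      Polynomial.coeff_zero, Finset.sum_ite_eq] at h2
    split_ifs at h2 with hn
    · exact h2
    · rw [homogeneousComponent_eq_zero, map_zero]
      simpa using hn
  · intro h
    change aeval (fun i => Polynomial.C (v i) * Polynomial.X) x = 0
    rw [key]
    exact Finset.sum_eq_zero fun i _ => by rw [h i]; simp

theorem mem_vanI_homog {K : Type} [Field K] {m : ℕ} (v : Fin (m+1) → K) {n : ℕ} {x : PR K m}
    (hx : x.IsHomogeneous n) : x ∈ vanI v ↔ eval v x = 0 := by
  rw [mem_vanI]
  constructor
  · intro h
    have := h n
    rwa [homogeneousComponent_eq_self hx] at this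
  · intro h k
    rw [homogeneousComponent_of_mem hx]
    split_ifs
    · exact h
    · simp

theorem vanI_homog {K : Type} [Field K] {m : ℕ} (v : Fin (m+1) → K) : IsHomogI (vanI v) := by
  intro x hx n
  rw [mem_vanI_homog v (homogeneousComponent_isHomogeneous n x)]
  exact (mem_vanI v x).1 hx n

theorem vanI_sat {K : Type} [Field K] {m : ℕ} (v : Fin (m+1) → K) (hv : v ≠ 0) :
    IsSatI (vanI v) := by
  intro x hx
  obtain ⟨i, hi⟩ := Function.ne_iff.1 hv
  have := hx i
  rw [vanI, RingHom.mem_ker, map_mul] at this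
  rcases mul_eq_zero.1 this with h | h
  · exfalso
    change aeval (fun i => Polynomial.C (v i) * Polynomial.X) (X i) = 0 at h
    simp at h
    exact hi h
  · exact h

/-- saturation with respect to one linear form -/
noncomputable def lsat {K : Type} [Field K] {m : ℕ} (J : Ideal (PR K m)) (l : PR K m) : Ideal (PR K m) where
  carrier := {x | ∃ N : ℕ, l ^ N * x ∈ J}
  add_mem' := by
    rintro a b ⟨N, hN⟩ ⟨M, hM⟩
    refine ⟨N + M, ?_⟩
    have : l ^ (N + M) * (a + b) = l ^ M * (l ^ N * a) + l ^ N * (l ^ M * b) := by ring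
    rw [this]
    exact J.add_mem (J.mul_mem_left _ hN) (J.mul_mem_left _ hM)
  zero_mem' := ⟨0, by simp⟩
  smul_mem' := by
    rintro c a ⟨N, hN⟩
    refine ⟨N, ?_⟩
    have : l ^ N * (c • a) = c * (l ^ N * a) := by simp only [smul_eq_mul]; ring
    rw [this]
    exact J.mul_mem_left _ hN

theorem satIdeal_le_lsat {K : Type} [Field K] {m : ℕ} (J : Ideal (PR K m)) (hJ : IsHomogI J)
    (c : Fin (m+1) → K) (x : PR K m) (hx : x ∈ satIdeal J) :
    ∃ N, (∑ i, C (c i) * X i : PR K m) ^ N * x ∈ J := by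
  set l : PR K m := ∑ i, C (c i) * X i with hl
  have hlh : l.IsHomogeneous 1 := IsHomogeneous.sum _ _ _ fun i _ => isHomogeneous_C_mul_X _ _
  suffices h : satIdeal J ≤ lsat J l from h hx
  refine sInf_le ⟨fun y hy => ⟨0, by simpa using hy⟩, ?_, ?_⟩
  · rintro y ⟨N, hN⟩ n
    refine ⟨N, ?_⟩
    have := aux_comp_mul (hlh.pow N) n y
    rw [← this]
    exact hJ _ hN _
  · intro y hy
    choose N hN using hy
    have h1 : l * y ∈ lsat J l := by
      rw [hl, Finset.sum_mul]
      refine Ideal.sum_mem _ fun i _ => ?_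
      rw [mul_assoc]
      exact Ideal.mul_mem_left _ _ ⟨N i, hN i⟩
    obtain ⟨M, hM⟩ := h1
    exact ⟨M + 1, by rw [pow_succ, mul_assoc]; exact hM⟩

theorem finrank_map_add {K V W : Type} [Field K] [AddCommGroup V] [Module K V] [AddCommGroup W]
    [Module K W] (p : Submodule K V) [FiniteDimensional K p] (g : V →ₗ[K] W) :
    Module.finrank K (p.map g) + Module.finrank K (LinearMap.ker (g.domRestrict p))
      = Module.finrank K p := by
  have := LinearMap.finrank_range_add_finrank_ker (g.domRestrict p)
  rwa [LinearMap.range_domRestrict] at this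

instance Hd_fin {K : Type} [Field K] {m : ℕ} (d : ℕ) : FiniteDimensional K (Hd K m d) :=
  Module.Finite.iff_fg.2 (homogeneousSubmodule_fg _ _ d)

theorem hilbQ_le_add {K : Type} [Field K] {m : ℕ} (I J C : Ideal (PR K m)) (h : I ⊓ J ≤ C) (s : ℕ) :
    hilbQ C s ≤ hilbQ I s + hilbQ J s := by
  let mI := (Ideal.Quotient.mkₐ K I).toLinearMap
  let mJ := (Ideal.Quotient.mkₐ K J).toLinearMap
  let mC := (Ideal.Quotient.mkₐ K C).toLinearMap
  let π := mI.prod mJ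
  have h1 := finrank_map_add (Hd K m s) mC
  have h2 := finrank_map_add (Hd K m s) π
  have h3 : LinearMap.ker (π.domRestrict (Hd K m s)) ≤ LinearMap.ker (mC.domRestrict (Hd K m s)) := by
    intro x hx
    rw [LinearMap.mem_ker] at hx ⊢
    have ha : Ideal.Quotient.mk I (x : PR K m) = 0 := congrArg Prod.fst hx
    have hb : Ideal.Quotient.mk J (x : PR K m) = 0 := congrArg Prod.snd hx
    rw [Ideal.Quotient.eq_zero_iff_mem] at ha hb
    exact Ideal.Quotient.eq_zero_iff_mem.2 (h ⟨ha, hb⟩)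
  have h4 := Submodule.finrank_mono h3
  let j := LinearMap.prodMap ((Hd K m s).map mI).subtype ((Hd K m s).map mJ).subtype
  have h5 : (Hd K m s).map π ≤ LinearMap.range j := by
    rintro _ ⟨x, hx, rfl⟩
    exact ⟨(⟨mI x, ⟨x, hx, rfl⟩⟩, ⟨mJ x, ⟨x, hx, rfl⟩⟩), rfl⟩
  have h6 := LinearMap.finrank_range_le j
  rw [Module.finrank_prod] at h6
  have h7 := Submodule.finrank_mono h5
  have h9 : hilbQ I s = Module.finrank K ((Hd K m s).map mI) := rfl
  have h10 : hilbQ J s = Module.finrank K ((Hd K m s).map mJ) := rfl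
  have h8 : hilbQ C s = Module.finrank K ((Hd K m s).map mC) := rfl
  omega

theorem hilb_mul {K : Type} [Field K] {m : ℕ} (C : Ideal (PR K m)) (l : PR K m)
    (hl : l.IsHomogeneous 1) (hnz : ∀ x, l * x ∈ C → x ∈ C) (e N : ℕ) :
    hilbQ C e ≤ hilbQ C (e + N) ∧ (hilbQ C (e + N) ≤ hilbQ C e →
      ∀ y : PR K m, y.IsHomogeneous (e + N) →
        ∃ x : PR K m, x.IsHomogeneous e ∧ y - l ^ N * x ∈ C) := by
  let mC := (Ideal.Quotient.mkₐ K C).toLinearMap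
  let μ : (PR K m ⧸ C) →ₗ[K] (PR K m ⧸ C) := LinearMap.mulLeft K (Ideal.Quotient.mk C (l ^ N))
  have hnzN : ∀ (N : ℕ) x, l ^ N * x ∈ C → x ∈ C := by
    intro N
    induction N with
    | zero => intro x hx; simpa using hx
    | succ k ih =>
      intro x hx
      refine hnz _ (ih _ ?_)
      rwa [← mul_assoc, ← pow_succ]
  have hμ : Function.Injective μ := by
    rw [← LinearMap.ker_eq_bot, LinearMap.ker_eq_bot']
    intro z hz
    obtain ⟨x, rfl⟩ := Ideal.Quotient.mk_surjective z
    have hz' : Ideal.Quotient.mk C (l ^ N * x) = 0 := by rw [map_mul]; exact hz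
    rw [Ideal.Quotient.eq_zero_iff_mem] at hz' ⊢
    exact hnzN N x hz'
  have hle : ((Hd K m e).map mC).map μ ≤ (Hd K m (e + N)).map mC := by
    rintro _ ⟨_, ⟨x, hx, rfl⟩, rfl⟩
    refine ⟨l ^ N * x, ?_, ?_⟩
    · have := (hl.pow N).mul (show x.IsHomogeneous e from hx)
      rw [one_mul, add_comm N e] at this
      exact this
    · exact map_mul (Ideal.Quotient.mk C) _ _
  have hfr : Module.finrank K (((Hd K m e).map mC).map μ) = hilbQ C e :=
    (((Hd K m e).map mC).equivMapOfInjective μ hμ).finrank_eq.symm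
  refine ⟨?_, ?_⟩
  · rw [← hfr]; exact Submodule.finrank_mono hle
  · intro h y hy
    have heq := Submodule.eq_of_le_of_finrank_le hle (by rw [hfr]; exact h)
    have : mC y ∈ ((Hd K m e).map mC).map μ := by rw [heq]; exact ⟨y, hy, rfl⟩
    obtain ⟨_, ⟨x, hx, rfl⟩, hxy⟩ := this
    refine ⟨x, hx, ?_⟩
    rw [← Ideal.Quotient.eq, map_mul]
    exact hxy.symm

theorem h1_surj {K : Type} [Field K] {m : ℕ} (C : Ideal (PR K m)) (l : PR K m)
    (hl : l.IsHomogeneous 1) (hnz : ∀ x, l * x ∈ C → x ∈ C) (hb : IsZeroDimI C) (e : ℕ)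
    (h1 : h1I C e = 0) (N : ℕ) (y : PR K m) (hy : y.IsHomogeneous (e + N)) :
    ∃ x : PR K m, x.IsHomogeneous e ∧ y - l ^ N * x ∈ C := by
  refine (hilb_mul C l hl hnz e N).2 ?_ y hy
  obtain ⟨M, hM⟩ := hb
  have hlt : Filter.limsup (fun t => hilbQ C t) Filter.atTop < hilbQ C e + 1 := by
    unfold h1I idealDeg at h1
    omega
  have hev := Filter.eventually_lt_of_limsup_lt hlt
    (Filter.isBoundedUnder_of ⟨M, hM⟩)
  obtain ⟨s, hs⟩ := Filter.eventually_atTop.1 hev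
  have h2 := hs (e + N + s) (by omega)
  have h3 := (hilb_mul C l hl hnz (e + N) s).1
  omega

theorem exists_lin {K : Type} [Field K] [Infinite K] {m : ℕ} (I J : Ideal (PR K m))
    (hI : IsSatI I) (hJ : IsSatI J) (T : Finset (Pm K m)) :
    ∃ c : Fin (m+1) → K,
      (∀ x, (∑ i, C (c i) * X i : PR K m) * x ∈ I → x ∈ I) ∧
      (∀ x, (∑ i, C (c i) * X i : PR K m) * x ∈ J → x ∈ J) ∧
      ∀ p ∈ T, eval p.rep (∑ i, C (c i) * X i : PR K m) ≠ 0 := by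
  classical
  let L : (Fin (m+1) → K) →ₗ[K] PR K m := Fintype.linearCombination K (fun i => (X i : PR K m))
  have hL : ∀ c, L c = ∑ i, C (c i) * X i := by
    intro c; simp [L, Fintype.linearCombination_apply, smul_eq_C_mul]
  let F : Ideal (PR K m) → Submodule K (Fin (m+1) → K) := fun p => (p.restrictScalars K).comap L
  let G : Pm K m → Submodule K (Fin (m+1) → K) := fun p =>
    LinearMap.ker ((aeval p.rep : PR K m →ₐ[K] K).toLinearMap ∘ₗ L)
  have hX : ∀ i, L (Pi.single i 1) = X i := by
    intro i; simp [L]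
  have fI := associatedPrimes.finite (PR K m) (PR K m ⧸ I)
  have fJ := associatedPrimes.finite (PR K m) (PR K m ⧸ J)
  let s : Finset (Submodule K (Fin (m+1) → K)) :=
    fI.toFinset.image F ∪ fJ.toFinset.image F ∪ T.image G
  have key : ∀ I : Ideal (PR K m), IsSatI I → ∀ p ∈ associatedPrimes (PR K m) (PR K m ⧸ I),
      F p ≠ ⊤ := by
    intro I hI p hp htop
    have hp' : p ≠ ⊤ := hp.1.ne_top
    have hXp : ∀ i, (X i : PR K m) ∈ p := by
      intro i
      have : (Pi.single i 1 : Fin (m+1) → K) ∈ F p := by rw [htop]; trivial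
      have h2 : L (Pi.single i 1) ∈ p := this
      rwa [hX] at h2
    rw [AssociatedPrimes.mem_iff, isAssociatedPrime_iff] at hp
    obtain ⟨_, z, hz⟩ := hp
    obtain ⟨y, rfl⟩ := Ideal.Quotient.mk_surjective z
    apply hp'
    rw [Ideal.eq_top_iff_one, hz, Submodule.mem_colon_singleton, one_smul, Submodule.mem_bot,
      Ideal.Quotient.eq_zero_iff_mem]
    apply hI
    intro i
    have := hXp i
    rw [hz, Submodule.mem_colon_singleton, Submodule.mem_bot] at this
    rw [← Ideal.Quotient.eq_zero_iff_mem, map_mul]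
    exact this
  have hs : ⊤ ∉ s := by
    intro h
    simp only [s, Finset.mem_union, Finset.mem_image, Set.Finite.mem_toFinset] at h
    rcases h with (⟨p, hp, h⟩ | ⟨p, hp, h⟩) | ⟨p, hp, h⟩
    · exact key I hI p hp h
    · exact key J hJ p hp h
    · apply p.rep_nonzero
      funext i
      have h2 : (Pi.single i 1 : Fin (m+1) → K) ∈ G p := by rw [h]; trivial
      have h3 : aeval p.rep (L (Pi.single i 1)) = 0 := h2
      rw [hX] at h3
      simpa using h3
  have hne := Subspace.biUnion_ne_univ_of_top_notMem hs
  obtain ⟨c, hc⟩ := (Set.ne_univ_iff_exists_notMem _).1 hne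
  have hc' : ∀ W ∈ s, c ∉ W := by
    intro W hW hcW
    exact hc (Set.mem_biUnion hW hcW)
  have key2 : ∀ I : Ideal (PR K m), (∀ p ∈ associatedPrimes (PR K m) (PR K m ⧸ I), c ∉ F p) →
      ∀ x, (∑ i, C (c i) * X i : PR K m) * x ∈ I → x ∈ I := by
    intro I h x hx
    by_contra hxI
    have : L c ∈ ⋃ p ∈ associatedPrimes (PR K m) (PR K m ⧸ I), (p : Set (PR K m)) := by
      rw [biUnion_associatedPrimes_eq_zero_divisors]
      refine ⟨Ideal.Quotient.mk I x, ?_, ?_⟩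
      · rwa [Ne, Ideal.Quotient.eq_zero_iff_mem]
      · rw [hL]
        have := Ideal.Quotient.eq_zero_iff_mem.2 hx
        rw [map_mul] at this
        exact this
    obtain ⟨p, hp, hcp⟩ := Set.mem_iUnion₂.1 this
    exact h p hp hcp
  refine ⟨c, key2 I fun p hp => hc' _ ?_, key2 J fun p hp => hc' _ ?_, ?_⟩
  · simp only [s, Finset.mem_union, Finset.mem_image, Set.Finite.mem_toFinset]
    exact Or.inl (Or.inl ⟨p, hp, rfl⟩)
  · simp only [s, Finset.mem_union, Finset.mem_image, Set.Finite.mem_toFinset]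
    exact Or.inl (Or.inr ⟨p, hp, rfl⟩)
  · intro p hp h0
    refine hc' (G p) ?_ ?_
    · simp only [s, Finset.mem_union, Finset.mem_image, Set.Finite.mem_toFinset]
      exact Or.inr ⟨p, hp, rfl⟩
    · change aeval p.rep (L c) = 0
      rw [hL]
      exact h0

theorem exists_sep {K : Type} [Field K] {m : ℕ} (p q : Pm K m) (hpq : p ≠ q) :
    ∃ h : PR K m, h.IsHomogeneous 1 ∧ eval p.rep h = 0 ∧ eval q.rep h ≠ 0 := by
  have hns : q.rep ∉ Submodule.span K {p.rep} := by
    intro h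
    obtain ⟨a, ha⟩ := Submodule.mem_span_singleton.1 h
    apply hpq
    rw [← p.mk_rep, ← q.mk_rep, Projectivization.mk_eq_mk_iff']
    refine ⟨a⁻¹, ?_⟩
    have ha0 : a ≠ 0 := by
      rintro rfl
      exact q.rep_nonzero (by rw [← ha, zero_smul])
    rw [← ha, smul_smul, inv_mul_cancel₀ ha0, one_smul]
  obtain ⟨g, hg1, hg2⟩ := Submodule.exists_le_ker_of_notMem hns
  have hev : ∀ v : Fin (m+1) → K, eval v (∑ i, C (g (Pi.single i 1)) * X i : PR K m) = g v := by
    intro v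
    conv_rhs => rw [← Finset.univ_sum_single v, map_sum]
    simp only [map_sum, map_mul, eval_C, eval_X]
    refine Finset.sum_congr rfl fun i _ => ?_
    have : (Pi.single i (v i) : Fin (m+1) → K) = v i • Pi.single i 1 := by
      rw [← Pi.single_smul]; simp
    rw [this, map_smul, smul_eq_mul, mul_comm]
  refine ⟨∑ i, C (g (Pi.single i 1)) * X i,
    IsHomogeneous.sum _ _ _ fun i _ => isHomogeneous_C_mul_X _ _, ?_, ?_⟩
  · rw [hev]; exact hg2 (Submodule.mem_span_singleton_self _)
  · rw [hev]; exact hg1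

end helpers

/-- Remark (`v4.0`), Claim: in the setting of Lemma `v4`,
`⟨ν_d(A ∩ D)⟩ ∩ ⟨ν_d(B ∩ D)⟩ ≠ ∅` and there is a point `Q` in it with
`P ∈ ⟨{Q} ∪ ν_d(E)⟩`. -/
theorem stmt7 (K : Type) [Field K] [IsAlgClosed K] [CharZero K]
    (m d t : ℕ) (P : PN K m d)
    (A B : PSub K m) (hA0 : IsZeroDimI A.I) (hB0 : IsZeroDimI B.I) (hAB : A.I ≠ B.I)
    (hPA : inSpanI A.I d P) (hPB : inSpanI B.I d P)
    (hA : ∀ A' : PSub K m, A.I < A'.I → ¬ inSpanI A'.I d P)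
    (hB : ∀ B' : PSub K m, B.I < B'.I → ¬ inSpanI B'.I d P)
    (hBred : IsReducedI B.I)
    (ht : 0 < t) (htd : t ≤ d) (f : PR K m) (hf : f.IsHomogeneous t) (hf0 : f ≠ 0)
    (hres : h1I (resIdeal (A.I ⊓ B.I) f) (d - t) = 0) :
    (schemeSpanSub (satIdeal (A.I ⊔ Ideal.span {f})) d ⊓
        schemeSpanSub (satIdeal (B.I ⊔ Ideal.span {f})) d ≠ ⊥) ∧
    ∃ Q : PN K m d,
      Q.rep ∈ schemeSpanSub (satIdeal (A.I ⊔ Ideal.span {f})) d ⊓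
          schemeSpanSub (satIdeal (B.I ⊔ Ideal.span {f})) d ∧
      P.rep ∈ Submodule.span K (insert Q.rep
        ((fun a => nu d a.rep) '' (pzeroLocus B.I \ pzeroLocus (Ideal.span {f})))) := by
  classical
  set φ := P.rep with hφ
  have hnu : ∀ (v : Fin (m+1) → K) (x : Hd K m d), nu d v x = MvPolynomial.eval v (x : PR K m) :=
    fun v x => rfl
  -- `φ` is a combination of evaluations at points of `B`
  have hspan : φ ∈ Submodule.span K ((fun a : Pm K m => nu d a.rep) '' pzeroLocus B.I) := by
    set W : Subspace K (Module.Dual K (Hd K m d)) :=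
      Submodule.span K ((fun a : Pm K m => nu d a.rep) '' pzeroLocus B.I) with hW
    rw [← Subspace.dualCoannihilator_dualAnnihilator_eq (W := W), Submodule.mem_dualAnnihilator]
    intro x hx
    rw [Submodule.mem_dualCoannihilator] at hx
    apply hPB x
    rw [hBred]
    refine Ideal.subset_span ⟨⟨d, x.2⟩, fun a ha => ?_⟩
    exact hx _ (Submodule.subset_span ⟨a, ha, rfl⟩)
  obtain ⟨b, hbs, hbφ⟩ := (Finsupp.mem_span_image_iff_linearCombination K).1 hspan
  have hTB : ∀ p ∈ b.support, p ∈ pzeroLocus B.I := fun p hp => hbs hp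
  have hφsum : φ = ∑ p ∈ b.support, b p • nu d p.rep := by
    rw [← hbφ, Finsupp.linearCombination_apply, Finsupp.sum]
  set TE := b.support.filter (fun p => MvPolynomial.eval p.rep f ≠ 0) with hTE
  set TD := b.support.filter (fun p => ¬ (MvPolynomial.eval p.rep f ≠ 0)) with hTD
  set ψ := ∑ p ∈ TE, b p • nu d p.rep with hψ
  set χ := ∑ p ∈ TD, b p • nu d p.rep with hχ
  have hsplit : φ = ψ + χ := by
    rw [hφsum, hψ, hχ, Finset.sum_filter_add_sum_filter_not]
  have hBvan : ∀ p ∈ b.support, ∀ x ∈ B.I, x ∈ vanI p.rep := fun p hp x hx =>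
    (mem_vanI _ _).2 (hTB p hp x hx)
  -- the linear form
  obtain ⟨c, hlI, hlJ, hlT⟩ := exists_lin A.I B.I A.sat B.sat b.support
  have hsatA := satIdeal_le_lsat (A.I ⊔ Ideal.span {f})
  set l : PR K m := ∑ i, MvPolynomial.C (c i) * MvPolynomial.X i with hl
  have hlh : l.IsHomogeneous 1 :=
    MvPolynomial.IsHomogeneous.sum _ _ _ fun i _ => MvPolynomial.isHomogeneous_C_mul_X _ _
  have hlIN : ∀ (N : ℕ) x, l ^ N * x ∈ A.I → x ∈ A.I := by
    intro N
    induction N with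
    | zero => intro x hx; simpa using hx
    | succ k ih =>
      intro x hx
      refine hlI _ (ih _ ?_)
      rwa [← mul_assoc, ← pow_succ]
  set Cc := resIdeal (A.I ⊓ B.I) f with hCc
  have hmemC : ∀ x, x ∈ Cc ↔ x * f ∈ A.I ∧ x * f ∈ B.I := by
    intro x
    rw [hCc, resIdeal, Ideal.span, Submodule.mem_colon_span_singleton]
    rfl
  have hCnz : ∀ x, l * x ∈ Cc → x ∈ Cc := by
    intro x hx
    rw [hmemC] at hx ⊢
    rw [mul_assoc] at hx
    exact ⟨hlI _ hx.1, hlJ _ hx.2⟩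
  have hCb : IsZeroDimI Cc := by
    obtain ⟨M, hM⟩ := hA0
    obtain ⟨M', hM'⟩ := hB0
    refine ⟨M + M', fun s => (hilbQ_le_add A.I B.I Cc ?_ s).trans (add_le_add (hM s) (hM' s))⟩
    rintro x ⟨hx1, hx2⟩
    exact (hmemC x).2 ⟨Ideal.mul_mem_right _ _ hx1, Ideal.mul_mem_right _ _ hx2⟩
  have hsurj := h1_surj Cc l hlh hCnz hCb (d - t) hres
  -- multiples of `f`
  have hfmul : ∀ x : PR K m, x.IsHomogeneous (d - t) → (f * x).IsHomogeneous d := by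
    intro x hx
    have := hf.mul hx
    rwa [Nat.add_sub_cancel' htd] at this
  have hCvan : ∀ p ∈ TE, ∀ x ∈ Cc, ∀ n, x.IsHomogeneous n → MvPolynomial.eval p.rep x = 0 := by
    intro p hp x hx n hxn
    rw [hTE, Finset.mem_filter] at hp
    have h1 := hBvan p hp.1 _ ((hmemC x).1 hx).2
    rw [mem_vanI_homog _ (hxn.mul hf), map_mul] at h1
    exact (mul_eq_zero.1 h1).resolve_right hp.2
  have hχf : ∀ (z : Hd K m d) (x : PR K m), (z : PR K m) = f * x → χ z = 0 := by
    intro z x hz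
    rw [hχ, LinearMap.sum_apply]
    refine Finset.sum_eq_zero fun p hp => ?_
    rw [hTD, Finset.mem_filter, not_not] at hp
    rw [LinearMap.smul_apply, hnu, hz, map_mul, hp.2, zero_mul, smul_zero]
  -- every point of `TE` lies on `A`
  have hEA : ∀ q ∈ TE, ∀ (s : ℕ) (u : PR K m), u ∈ A.I → u.IsHomogeneous s →
      MvPolynomial.eval q.rep u = 0 := by
    intro q hq s u hu hus
    have hsep : ∀ p : Pm K m, ∃ h : PR K m, h.IsHomogeneous 1 ∧
        (p ≠ q → MvPolynomial.eval p.rep h = 0) ∧ MvPolynomial.eval q.rep h ≠ 0 := by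
      intro p
      by_cases hpq : p = q
      · exact ⟨l, hlh, fun h => absurd hpq h, hlT q (Finset.mem_filter.1 hq).1⟩
      · obtain ⟨h, h1, h2, h3⟩ := exists_sep p q hpq
        exact ⟨h, h1, fun _ => h2, h3⟩
    choose g hg1 hg2 hg3 using hsep
    set h : PR K m := (∏ p ∈ TE.erase q, g p) * l ^ (d - t) with hh
    have hprod := MvPolynomial.IsHomogeneous.prod (TE.erase q) g (fun _ => 1) (fun p _ => hg1 p)
    have hhom : (h * u).IsHomogeneous ((d - t) + ((TE.erase q).card + s)) := by
      have := (hprod.mul (hlh.pow (d - t))).mul hus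
      convert this using 1
      simp; ring
    obtain ⟨x, hx, hxC⟩ := hsurj _ _ hhom
    set N := (TE.erase q).card + s with hN
    have hxA : f * x ∈ A.I := by
      apply hlIN N
      have h1 := ((hmemC _).1 hxC).1
      have h2 : l ^ N * (f * x) = (h * f) * u - (h * u - l ^ N * x) * f := by ring
      rw [h2]
      exact A.I.sub_mem (A.I.mul_mem_left _ hu) h1
    have hhom2 : (h * u - l ^ N * x).IsHomogeneous (d - t + N) := by
      refine hhom.sub ?_
      have := (hlh.pow N).mul hx
      rwa [one_mul, add_comm N (d - t)] at this
    have hval : ∀ p ∈ TE, MvPolynomial.eval p.rep h * MvPolynomial.eval p.rep u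
        = MvPolynomial.eval p.rep l ^ N * MvPolynomial.eval p.rep x := by
      intro p hp
      have := hCvan p hp _ hxC _ hhom2
      rw [map_sub, map_mul _ h u, map_mul _ (l ^ N) x, map_pow] at this
      exact sub_eq_zero.1 this
    have hx0 : ∀ p ∈ TE, p ≠ q → MvPolynomial.eval p.rep x = 0 := by
      intro p hp hpq
      have h1 := hval p hp
      have h2 : MvPolynomial.eval p.rep h = 0 := by
        rw [hh, map_mul, map_prod, Finset.prod_eq_zero (Finset.mem_erase.2 ⟨hpq, hp⟩)
          (hg2 p hpq), zero_mul]
      rw [h2, zero_mul] at h1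
      exact (mul_eq_zero.1 h1.symm).resolve_left
        (pow_ne_zero _ (hlT p (Finset.mem_filter.1 hp).1))
    have hφ0 : φ ⟨f * x, hfmul x hx⟩ = 0 := hPA _ hxA
    rw [hsplit, LinearMap.add_apply, hχf _ x rfl, add_zero, hψ, LinearMap.sum_apply,
      Finset.sum_eq_single q] at hφ0
    · rw [LinearMap.smul_apply, hnu, map_mul, smul_eq_mul] at hφ0
      have hq' := Finset.mem_filter.1 hq
      have hbq : b q ≠ 0 := Finsupp.mem_support_iff.1 hq'.1
      have hxq : MvPolynomial.eval q.rep x = 0 :=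
        (mul_eq_zero.1 ((mul_eq_zero.1 hφ0).resolve_left hbq)).resolve_left hq'.2
      have h1 := hval q hq
      rw [hxq, mul_zero] at h1
      refine (mul_eq_zero.1 h1).resolve_left ?_
      rw [hh, map_mul, map_prod, map_pow]
      exact mul_ne_zero (Finset.prod_ne_zero_iff.2 fun p _ => hg3 p)
        (pow_ne_zero _ (hlT q hq'.1))
    · intro p hp hpq
      rw [LinearMap.smul_apply, hnu, map_mul, hx0 p hp hpq, mul_zero, smul_zero]
    · intro h; exact absurd hq h
  have hψA : ∀ z : Hd K m d, (z : PR K m) ∈ A.I → ψ z = 0 := by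
    intro z hz
    rw [hψ, LinearMap.sum_apply]
    refine Finset.sum_eq_zero fun p hp => ?_
    rw [LinearMap.smul_apply, hnu, hEA p hp d _ hz z.2, smul_zero]
  have hχA : ∀ z : Hd K m d, (z : PR K m) ∈ A.I → χ z = 0 := by
    intro z hz
    have h1 : φ z = 0 := hPA z hz
    rwa [hsplit, LinearMap.add_apply, hψA z hz, zero_add] at h1
  -- `χ` in the span of `A ∩ D`
  have hχ1 : χ ∈ schemeSpanSub (satIdeal (A.I ⊔ Ideal.span {f})) d := by
    intro z hz
    have hhomog : IsHomogI (A.I ⊔ Ideal.span {f}) := by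
      intro x hx n
      obtain ⟨y, hy, w, hw, rfl⟩ := Submodule.mem_sup.1 hx
      obtain ⟨r, rfl⟩ := Ideal.mem_span_singleton'.1 hw
      rw [map_add]
      refine Ideal.add_mem _ (Ideal.mem_sup_left (A.homog _ hy n)) (Ideal.mem_sup_right ?_)
      rw [mul_comm]
      by_cases hn : t ≤ n
      · obtain ⟨k, rfl⟩ := Nat.exists_eq_add_of_le hn
        rw [aux_comp_mul hf]
        exact Ideal.mul_mem_right _ _ (Ideal.mem_span_singleton_self f)
      · rw [aux_comp_mul_lt hf (by omega)]
        exact Ideal.zero_mem _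
    obtain ⟨N, hN⟩ := hsatA hhomog c z hz
    obtain ⟨y, hy, w, hw, hyw⟩ := Submodule.mem_sup.1 hN
    obtain ⟨r, rfl⟩ := Ideal.mem_span_singleton'.1 hw
    have hz2 : (l ^ N * (z : PR K m)).IsHomogeneous (t + (d - t + N)) := by
      have := (hlh.pow N).mul z.2
      convert this using 1
      omega
    have h1 := congrArg (MvPolynomial.homogeneousComponent (t + (d - t + N))) hyw
    rw [MvPolynomial.homogeneousComponent_eq_self hz2, map_add, mul_comm r f,
      aux_comp_mul hf] at h1
    obtain ⟨x, hx, hxC⟩ := hsurj N _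
      (MvPolynomial.homogeneousComponent_isHomogeneous (d - t + N) r)
    have h2 : (z : PR K m) - f * x ∈ A.I := by
      apply hlIN N
      have h3 : l ^ N * ((z : PR K m) - f * x)
          = MvPolynomial.homogeneousComponent (t + (d - t + N)) y
          + (MvPolynomial.homogeneousComponent (d - t + N) r - l ^ N * x) * f := by
        rw [mul_sub]
        change l ^ N * (z : PR K m) - _ = _
        rw [show l ^ N * (z : PR K m) = _ from h1.symm]
        ring
      rw [h3]
      exact A.I.add_mem (A.homog _ hy _) ((hmemC _).1 hxC).1
    have h4 : z = (z - ⟨f * x, hfmul x hx⟩) + ⟨f * x, hfmul x hx⟩ := by abel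
    rw [h4, map_add, hχf ⟨f * x, hfmul x hx⟩ x rfl, add_zero]
    exact hχA _ h2
  have hχ2 : χ ∈ schemeSpanSub (satIdeal (B.I ⊔ Ideal.span {f})) d := by
    intro z hz
    rw [hχ, LinearMap.sum_apply]
    refine Finset.sum_eq_zero fun p hp => ?_
    rw [hTD, Finset.mem_filter, not_not] at hp
    have hle : satIdeal (B.I ⊔ Ideal.span {f}) ≤ vanI p.rep := by
      refine sInf_le ⟨sup_le (hBvan p hp.1) ?_, vanI_homog _, vanI_sat _ p.rep_nonzero⟩
      rw [Ideal.span_singleton_le_iff_mem, mem_vanI_homog _ hf]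
      exact hp.2
    have := (mem_vanI_homog _ z.2).1 (hle hz)
    rw [LinearMap.smul_apply, hnu, this, smul_zero]
  -- `χ ≠ 0`
  have hχ0 : χ ≠ 0 := by
    intro h0
    have hφψ : φ = ψ := by rw [hsplit, h0, add_zero]
    let S : PSub K m :=
      { I := ⨅ p ∈ TE, vanI p.rep
        homog := by
          intro x hx n
          simp only [Ideal.mem_iInf] at hx ⊢
          exact fun p hp => vanI_homog _ _ (hx p hp) n
        sat := by
          intro x hx
          simp only [Ideal.mem_iInf] at hx ⊢
          exact fun p hp => vanI_sat _ p.rep_nonzero x fun i => hx i p hp }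
    have hS : inSpanI S.I d P := by
      intro z hz
      change φ z = 0
      rw [hφψ, hψ, LinearMap.sum_apply]
      refine Finset.sum_eq_zero fun p hp => ?_
      have hz' : ∀ p ∈ TE, (z : PR K m) ∈ vanI p.rep := by
        simpa only [S, Ideal.mem_iInf] using hz
      rw [LinearMap.smul_apply, hnu, (mem_vanI_homog _ z.2).1 (hz' p hp), smul_zero]
    have hAS : A.I ≤ S.I := by
      refine le_iInf₂ fun p hp x hx => (mem_vanI _ _).2 fun n => ?_
      exact hEA p hp n _ (A.homog x hx n) (MvPolynomial.homogeneousComponent_isHomogeneous n x)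
    have hBS : B.I ≤ S.I :=
      le_iInf₂ fun p hp x hx => hBvan p (Finset.mem_filter.1 hp).1 x hx
    have e1 : A.I = S.I := by
      by_contra hne
      exact hA S (lt_of_le_of_ne hAS hne) hS
    have e2 : B.I = S.I := by
      by_contra hne
      exact hB S (lt_of_le_of_ne hBS hne) hS
    exact hAB (e1.trans e2.symm)
  refine ⟨?_, Projectivization.mk K χ hχ0, ?_, ?_⟩
  · intro h
    have : χ ∈ (⊥ : Submodule K (Module.Dual K (Hd K m d))) := h ▸ ⟨hχ1, hχ2⟩
    exact hχ0 this
  · obtain ⟨a, ha⟩ := Projectivization.exists_smul_eq_mk_rep K χ hχ0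
    rw [← ha]
    exact Submodule.smul_mem _ _ ⟨hχ1, hχ2⟩
  · obtain ⟨a, ha⟩ := Projectivization.exists_smul_eq_mk_rep K χ hχ0
    rw [hsplit]
    refine Submodule.add_mem _ (Submodule.sum_mem _ fun p hp => Submodule.smul_mem _ _
      (Submodule.subset_span (Set.mem_insert_of_mem _ ⟨p, ⟨?_, ?_⟩, rfl⟩))) ?_
    · exact hTB p (Finset.mem_filter.1 hp).1
    · intro hpf
      have h1 := hpf f (Ideal.mem_span_singleton_self f) t
      rw [MvPolynomial.homogeneousComponent_eq_self hf] at h1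
      exact (Finset.mem_filter.1 hp).2 h1
    · have h1 : χ = a⁻¹ • (Projectivization.mk K χ hχ0).rep := by
        rw [← ha, inv_smul_smul]
      have h2 : a⁻¹ • (Projectivization.mk K χ hχ0).rep ∈ Submodule.span K
          (insert (Projectivization.mk K χ hχ0).rep ((fun a : Pm K m => nu d a.rep) ''
            (pzeroLocus B.I \ pzeroLocus (Ideal.span {f})))) :=
        Submodule.smul_mem _ _ (Submodule.subset_span (Set.mem_insert _ _))
      rwa [← h1] at h2
end

section
/- Let m = 2. Fix integers w ≥ 3 and d ≥ 4w−1. Take distinct lines L_1, L_2 ⊂ ℙ^2 and set {O} := L_1 ∩ L_2. Let A_1 ⊂ L_1 be the degree-w effective divisor of L_1 supported at O. Fix O_2 ∈ L_2 ∖ {O} and let A_2 ⊂ L_2 be the degree-w effective divisor of L_2 supported at O_2. Set A := A_1 ∪ A_2. Then for every P ∈ ⟨ν_d(A)⟩ with P ∉ ⟨ν_d(A')⟩ for any A' ⊊ A, one has br(P) = 2w and sr(P) ≥ 2d+3−2w; moreover, there exists such a P with sr(P) = 2d+3−2w. -/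
open scoped LinearAlgebra.Projectivization

set_option linter.unusedSectionVars false

namespace V8
open MvPolynomial

section gen
variable {K : Type} [Field K] {σ : Type} [Fintype σ] [DecidableEq σ]

/-- linear form -/
noncomputable def lin (a : σ → K) : MvPolynomial σ K := ∑ j, C (a j) * X j

lemma eval_lin (a u : σ → K) : eval u (lin a) = ∑ j, a j * u j := by
  simp [lin]

lemma lin_hom (a : σ → K) : (lin a).IsHomogeneous 1 := by
  apply IsHomogeneous.sum
  intro i _
  exact isHomogeneous_C_mul_X _ _

lemma hom_deg {f : MvPolynomial σ K} {n : ℕ} (hf : f.IsHomogeneous n) {m : σ →₀ ℕ}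
    (hm : m ∈ f.support) : m.degree = n := by
  by_contra h
  exact (mem_support_iff.mp hm) (hf.coeff_eq_zero h)

lemma kill (Ψ : MvPolynomial σ K →ₗ[K] K) (k : ℕ) (U : (σ →₀ ℕ) → Prop)
    (hU : ∀ m : σ →₀ ℕ, m.degree = k → U m → Ψ (monomial m 1) = 0)
    (g : MvPolynomial σ K) (hg : g.IsHomogeneous k) (hs : ∀ m ∈ g.support, U m) : Ψ g = 0 := by
  rw [g.as_sum, map_sum]
  apply Finset.sum_eq_zero
  intro m hm
  have : monomial m (coeff m g) = (coeff m g) • monomial m (1 : K) := by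
    rw [smul_monomial]; simp
  rw [this, map_smul, hU m (hom_deg hg hm) (hs m hm)]; simp

lemma exists_lin (p q : σ → K) (h : ∀ t : K, p ≠ t • q) :
    ∃ a : σ → K, (∑ j, a j * q j = 0) ∧ (∑ j, a j * p j = 1) := by
  have hp : p ∉ Submodule.span K {q} := by
    intro hp
    obtain ⟨t, ht⟩ := Submodule.mem_span_singleton.mp hp
    exact h t ht.symm
  obtain ⟨f, hf, hfq⟩ := Submodule.exists_le_ker_of_notMem hp
  have key : ∀ v : σ → K, ∑ j, f (Pi.single j 1) * v j = f v := by
    intro v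
    conv_rhs => rw [← Finset.univ_sum_single v]
    rw [map_sum]
    apply Finset.sum_congr rfl
    intro j _
    have : (Pi.single j (v j) : σ → K) = v j • Pi.single j 1 := by
      rw [← Pi.single_smul]; simp
    rw [this, map_smul, smul_eq_mul, mul_comm]
  have hq : f q = 0 := hfq (Submodule.mem_span_singleton_self q)
  refine ⟨fun j => (f p)⁻¹ * f (Pi.single j 1), ?_, ?_⟩
  · simp only [mul_assoc]; rw [← Finset.mul_sum, key, hq, mul_zero]
  · simp only [mul_assoc]; rw [← Finset.mul_sum, key, inv_mul_cancel₀ hf]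

/-- pairwise non-proportional nonzero vectors -/
def NP {ι : Type} (S : Finset ι) (u : ι → σ → K) : Prop :=
  (∀ i ∈ S, u i ≠ 0) ∧ ∀ i ∈ S, ∀ j ∈ S, i ≠ j → ∀ t : K, u i ≠ t • u j

lemma NP.mono {ι : Type} {S T : Finset ι} {u : ι → σ → K} (h : NP S u) (hT : T ⊆ S) : NP T u :=
  ⟨fun i hi => h.1 i (hT hi), fun i hi j hj => h.2 i (hT hi) j (hT hj)⟩

lemma exists_prod {ι : Type} (T : Finset ι) (u : ι → σ → K) (p : σ → K)
    (h : ∀ i ∈ T, ∀ t : K, p ≠ t • u i) :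
    ∃ F : MvPolynomial σ K, F.IsHomogeneous T.card ∧ eval p F = 1 ∧ ∀ i ∈ T, eval (u i) F = 0 := by
  classical
  induction T using Finset.induction_on with
  | empty => exact ⟨1, by simpa using isHomogeneous_one σ K, by simp, by simp⟩
  | insert a T ha ih =>
    obtain ⟨F, h1, h2, h3⟩ := ih (fun i hi => h i (Finset.mem_insert_of_mem hi))
    obtain ⟨l, hl1, hl2⟩ := exists_lin p (u a) (h a (Finset.mem_insert_self _ _))
    refine ⟨F * lin l, ?_, ?_, ?_⟩
    · rw [Finset.card_insert_of_notMem ha]; exact h1.mul (lin_hom l)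
    · rw [map_mul, h2, eval_lin, hl2, mul_one]
    · intro i hi
      rw [map_mul, eval_lin]
      rcases Finset.mem_insert.mp hi with rfl | hi
      · rw [hl1, mul_zero]
      · rw [h3 i hi, zero_mul]

lemma indep {ι : Type} (S : Finset ι) (u : ι → σ → K) (c : ι → K) (k : ℕ)
    (hS : NP S u) (hc : ∀ i ∈ S, c i ≠ 0) (hne : S.Nonempty)
    (h0 : ∀ g : MvPolynomial σ K, g.IsHomogeneous k → ∑ i ∈ S, c i * eval (u i) g = 0) :
    k + 2 ≤ S.card := by
  classical
  by_contra hlt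
  obtain ⟨i, hi⟩ := hne
  obtain ⟨F, h1, h2, h3⟩ := exists_prod (S.erase i) u (u i) (fun j hj t => 
    hS.2 i hi j (Finset.mem_of_mem_erase hj) (Finset.ne_of_mem_erase hj).symm t)
  obtain ⟨a, ha⟩ := Function.ne_iff.mp (hS.1 i hi)
  have hcard := Finset.card_erase_of_mem hi
  have hpos : 0 < S.card := Finset.card_pos.mpr ⟨i, hi⟩
  have hh := h0 (F * X a ^ (k - (S.erase i).card)) (by
    have := h1.mul (isHomogeneous_X_pow (R := K) a (k - (S.erase i).card))
    convert this using 1; omega)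
  rw [Finset.sum_eq_single_of_mem i hi] at hh
  · rw [map_mul, h2, map_pow, eval_X, one_mul] at hh
    rcases mul_eq_zero.mp hh with h | h
    · exact hc i hi h
    · exact ha (by simpa using eq_zero_of_pow_eq_zero h)
  · intro j hj hji
    rw [map_mul, h3 j (Finset.mem_erase.mpr ⟨hji, hj⟩)]; ring

end gen

section core
variable {K : Type} [Field K]

lemma exists_line (p q : Fin 3 → K) : ∃ a : Fin 3 → K, a ≠ 0 ∧ (∑ j, a j * p j = 0) ∧
    (∑ j, a j * q j = 0) := by
  have h : (Matrix.of ![p, q, 0]).det = 0 := by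
    rw [Matrix.det_eq_zero_of_row_eq_zero 2]; intro j; simp
  obtain ⟨a, ha, h⟩ := Matrix.exists_mulVec_eq_zero_iff.mpr h
  refine ⟨a, ha, ?_, ?_⟩
  · have := congrFun h 0
    simpa [Matrix.mulVec, dotProduct, mul_comm] using this
  · have := congrFun h 1
    simpa [Matrix.mulVec, dotProduct, mul_comm] using this

lemma points {ι : Type} (k : ℕ) : ∀ (S : Finset ι) (u : ι → Fin 3 → K) (c : ι → K)
    (_ : NP S u) (_ : ∀ i ∈ S, c i ≠ 0) (_ : S.Nonempty)
    (_ : ∀ g : MvPolynomial (Fin 3) K, g.IsHomogeneous k → ∑ i ∈ S, c i * eval (u i) g = 0)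
    (_ : S.card ≤ 2 * k + 1),
    ∃ a : Fin 3 → K, a ≠ 0 ∧ ∃ T ⊆ S, k + 2 ≤ T.card ∧ ∀ i ∈ T, ∑ j, a j * u i j = 0 := by
  classical
  induction k with
  | zero =>
    intro S u c hS hc hne h0 hcard
    have := indep S u c 0 hS hc hne h0
    omega
  | succ k ih =>
    intro S u c hS hc hne h0 hcard
    have hbig := indep S u c _ hS hc hne h0
    let N : (Fin 3 → K) → ℕ := fun a => (S.filter (fun i => ∑ j, a j * u i j = 0)).card
    obtain ⟨a, ha, hmax⟩ : ∃ a : Fin 3 → K, a ≠ 0 ∧ ∀ b, b ≠ 0 → N b ≤ N a := by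
      have hb : ∃ n, (∃ a : Fin 3 → K, a ≠ 0 ∧ N a = n) := ⟨_, fun _ => 1, by
        intro h; simpa using congrFun h 0, rfl⟩
      have hbd : ∀ n, (∃ a : Fin 3 → K, a ≠ 0 ∧ N a = n) → n ≤ S.card := by
        rintro n ⟨a, _, rfl⟩; exact Finset.card_filter_le _ _
      obtain ⟨n0, hn0⟩ := hb
      obtain ⟨a, ha, han⟩ := Nat.findGreatest_spec (P := fun n => ∃ a : Fin 3 → K, a ≠ 0 ∧ N a = n)
        (hbd n0 hn0) hn0
      refine ⟨a, ha, fun b hb => ?_⟩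
      rw [han]
      exact Nat.le_findGreatest (hbd _ ⟨b, hb, rfl⟩) ⟨b, hb, rfl⟩
    have h2 : 2 ≤ N a := by
      obtain ⟨i, hi, j, hj, hij⟩ := Finset.one_lt_card.mp (show 1 < S.card by omega)
      obtain ⟨b, hb, hbi, hbj⟩ := exists_line (u i) (u j)
      refine le_trans ?_ (hmax b hb)
      rw [← Finset.card_pair hij]
      apply Finset.card_le_card
      intro x hx
      rcases Finset.mem_insert.mp hx with rfl | hx
      · exact Finset.mem_filter.mpr ⟨hi, hbi⟩
      · rw [Finset.mem_singleton.mp hx]; exact Finset.mem_filter.mpr ⟨hj, hbj⟩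
    have hsplit := Finset.card_filter_add_card_filter_not (s := S) (fun i => ∑ j, a j * u i j = 0)
    set T := S.filter (fun i => ¬ ∑ j, a j * u i j = 0) with hT
    change N a + T.card = S.card at hsplit
    by_cases hTne : T.Nonempty
    · obtain ⟨b, hb, T', hT', hT'c, hT'0⟩ := ih T u (fun i => c i * ∑ j, a j * u i j)
        (hS.mono (Finset.filter_subset _ _))
        (fun i hi => mul_ne_zero (hc i (Finset.mem_filter.mp hi).1) (Finset.mem_filter.mp hi).2)
        hTne (by
          intro g hg
          have := h0 (lin a * g) (by rw [add_comm k 1]; exact (lin_hom a).mul hg)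
          rw [← this]
          rw [hT, Finset.sum_filter]
          apply Finset.sum_congr rfl
          intro i hi
          rw [map_mul, eval_lin]
          split_ifs with h
          · rw [h]; ring
          · ring) (by omega)
      exfalso
      have : T'.card ≤ N b := by
        apply Finset.card_le_card
        intro i hi
        exact Finset.mem_filter.mpr ⟨Finset.filter_subset _ _ (hT' hi), hT'0 i hi⟩
      have h3 := Finset.card_le_card hT'
      have := hmax b hb
      omega
    · refine ⟨a, ha, S.filter (fun i => ∑ j, a j * u i j = 0), Finset.filter_subset _ _, ?_, ?_⟩
      · rw [Finset.not_nonempty_iff_eq_empty] at hTne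
        rw [hTne] at hsplit
        simp only [Finset.card_empty, add_zero] at hsplit
        change _ ≤ N a
        omega
      · intro i hi; exact (Finset.mem_filter.mp hi).2

end core
end V8

namespace V8
open MvPolynomial

section core2
variable {K : Type} [Field K]

lemma homcast {f : MvPolynomial (Fin 3) K} {a b : ℕ} (h : f.IsHomogeneous a) (e : a = b) :
    f.IsHomogeneous b := e ▸ h

/-- monomial condition -/
def Um (i1 i2 : Fin 3) (r : ℕ) (m : Fin 3 →₀ ℕ) : Prop := 1 ≤ m i2 ∨ r ≤ m i1

lemma supp_mul_X_pow {i1 i2 : Fin 3} {r : ℕ} (A : MvPolynomial (Fin 3) K) :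
    ∀ m ∈ (A * X i1 ^ r).support, Um i1 i2 r m := by
  classical
  intro m hm
  rw [mem_support_iff, X_pow_eq_monomial, coeff_mul_monomial'] at hm
  right
  by_contra h
  rw [if_neg] at hm
  · exact hm rfl
  · intro h2; apply h; simpa using h2 i1

lemma supp_mul_X {i1 i2 : Fin 3} {r : ℕ} (A : MvPolynomial (Fin 3) K) :
    ∀ m ∈ (A * X i2).support, Um i1 i2 r m := by
  classical
  intro m hm
  rw [mem_support_iff, coeff_mul_X'] at hm
  left
  by_contra h
  rw [if_neg] at hm
  · exact hm rfl
  · intro h2; apply h; rw [Finsupp.mem_support_iff] at h2; omega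

lemma supp_add {U : (Fin 3 →₀ ℕ) → Prop} {A B : MvPolynomial (Fin 3) K}
    (hA : ∀ m ∈ A.support, U m) (hB : ∀ m ∈ B.support, U m) : ∀ m ∈ (A + B).support, U m := by
  classical
  intro m hm
  rcases Finset.mem_union.mp (support_add hm) with h | h
  · exact hA m h
  · exact hB m h

/-- Every polynomial with value 1 at `e_{i0}` and homogeneous of degree `n` is `x0^n` mod `x1,x2`. -/
lemma mod_x {i0 i1 i2 : Fin 3} (h01 : i0 ≠ i1) (h02 : i0 ≠ i2) (h12 : i1 ≠ i2)
    (F : MvPolynomial (Fin 3) K) (n : ℕ) (hF : F.IsHomogeneous n)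
    (h1 : eval (Pi.single i0 1) F = 1) :
    ∃ A B, F = X i0 ^ n + A * X i1 + B * X i2 := by
  have hmem : F - X i0 ^ n ∈ Ideal.span (X '' {i1, i2} : Set (MvPolynomial (Fin 3) K)) := by
    rw [mem_ideal_span_X_image]
    intro m hm
    by_contra hcon
    push Not at hcon
    have hm1 : m i1 = 0 := hcon i1 (by simp)
    have hm2 : m i2 = 0 := hcon i2 (by simp)
    have hdeg : m.degree = n := hom_deg (hF.sub (isHomogeneous_X_pow i0 n)) hm
    have hall : ∀ j, j = i0 ∨ j = i1 ∨ j = i2 := by omega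
    have hms : m = Finsupp.single i0 n := by
      have : m = Finsupp.single i0 (m i0) := by
        ext j
        rcases hall j with rfl | rfl | rfl
        · simp
        · rw [hm1, Finsupp.single_eq_of_ne h01.symm]
        · rw [hm2, Finsupp.single_eq_of_ne h02.symm]
      rw [this] at hdeg
      rw [Finsupp.degree_single] at hdeg
      rw [this, hdeg]
    have hcoef : coeff (Finsupp.single i0 n) F = 1 := by
      rw [← h1, eval_eq, Finset.sum_eq_single (Finsupp.single i0 n)]
      · rw [Finset.prod_eq_one, mul_one]
        intro j hj
        by_cases hji : j = i0
        · subst hji; simp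
        · rw [Finsupp.single_eq_of_ne hji, pow_zero]
      · intro m' hm' hne
        have : ∃ j, j ≠ i0 ∧ m' j ≠ 0 := by
          by_contra hc
          push Not at hc
          apply hne
          have h3 : m' = Finsupp.single i0 (m' i0) := by
            ext j
            by_cases hj : j = i0
            · subst hj; simp
            · rw [hc j hj, Finsupp.single_eq_of_ne hj]
          have h4 := hom_deg hF hm'
          rw [h3, Finsupp.degree_single] at h4
          rw [h3, h4]
        obtain ⟨j, hj, hj0⟩ := this
        rw [Finset.prod_eq_zero (i := j)]
        · ring
        · simpa using hj0
        · rw [Pi.single_eq_of_ne hj, zero_pow hj0]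
      · intro h; rw [notMem_support_iff.mp h, zero_mul]
    rw [mem_support_iff, coeff_sub, hms, hcoef, X_pow_eq_monomial, coeff_monomial, if_pos rfl] at hm
    exact hm (sub_self _)
  rw [Set.image_pair, Ideal.mem_span_pair] at hmem
  obtain ⟨A, B, h⟩ := hmem
  exact ⟨A, B, by rw [add_assoc, h]; ring⟩

/-- point functional -/
noncomputable def Psi {ι : Type} (S : Finset ι) (c : ι → K) (u : ι → Fin 3 → K) :
    MvPolynomial (Fin 3) K →ₗ[K] K := ∑ i ∈ S, c i • (aeval (u i)).toLinearMap

lemma Psi_apply {ι : Type} (S : Finset ι) (c : ι → K) (u : ι → Fin 3 → K)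
    (g : MvPolynomial (Fin 3) K) : Psi S c u g = ∑ i ∈ S, c i * eval (u i) g := by
  simp [Psi, LinearMap.sum_apply]

lemma lemQ {ι : Type} (S : Finset ι) (c : ι → K) (u : ι → Fin 3 → K) (k r : ℕ) (hr : 2 ≤ r)
    (i0 i1 i2 : Fin 3) (h01 : i0 ≠ i1) (h02 : i0 ≠ i2) (h12 : i1 ≠ i2)
    (hu0 : ∀ i ∈ S, u i ≠ 0)
    (hkill : ∀ m : Fin 3 →₀ ℕ, m.degree = k → Um i1 i2 r m → Psi S c u (monomial m 1) = 0)
    (hne : ∀ n, n + r = k + 1 → Psi S c u (X i0 ^ n * X i1 ^ (r - 1)) ≠ 0) :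
    k + 2 ≤ S.card + r := by
  classical
  by_contra hlt
  let T := S.filter (fun i => ∀ t : K, (Pi.single i0 1 : Fin 3 → K) ≠ t • u i)
  obtain ⟨F, hF1, hF2, hF3⟩ := exists_prod T u (Pi.single i0 1 : Fin 3 → K)
    (fun i hi => (Finset.mem_filter.mp hi).2)
  have hTS : T.card ≤ S.card := Finset.card_filter_le _ _
  set n := k + 1 - r with hn
  obtain ⟨A, B, hAB⟩ := mod_x h01 h02 h12 (F * X i0 ^ (n - T.card)) n (by
    have := hF1.mul (isHomogeneous_X_pow (R := K) i0 (n - T.card))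
    convert this using 1; omega) (by simp [hF2])
  set G := F * X i0 ^ (n - T.card) with hG
  have hGh : G.IsHomogeneous n := by
    have := hF1.mul (isHomogeneous_X_pow (R := K) i0 (n - T.card))
    convert this using 1; omega
  have h0 : Psi S c u (G * X i1 ^ (r - 1)) = 0 := by
    rw [Psi_apply]
    apply Finset.sum_eq_zero
    intro i hi
    by_cases hiT : i ∈ T
    · rw [hG, map_mul, map_mul, hF3 i hiT]; ring
    · have : ∃ t : K, (Pi.single i0 1 : Fin 3 → K) = t • u i := by
        by_contra hc
        push Not at hc
        exact hiT (Finset.mem_filter.mpr ⟨hi, hc⟩)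
      obtain ⟨t, ht⟩ := this
      have h1 := congrFun ht i1
      have h2 := congrFun ht i0
      simp only [Pi.single_eq_of_ne h01.symm, Pi.smul_apply, smul_eq_mul, Pi.single_eq_same] at h1 h2
      have ht0 : t ≠ 0 := by rintro rfl; simp at h2
      have hui : u i i1 = 0 := by
        rcases mul_eq_zero.mp h1.symm with h | h
        · exact absurd h ht0
        · exact h
      rw [map_mul, map_pow, eval_X, hui, zero_pow (by omega)]; ring
  have h1 : Psi S c u (G * X i1 ^ (r - 1) - X i0 ^ n * X i1 ^ (r - 1)) = 0 := by
    apply kill (Psi S c u) k (Um i1 i2 r) hkill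
    · apply IsHomogeneous.sub
      · exact homcast (hGh.mul (isHomogeneous_X_pow (R := K) i1 (r - 1))) (by omega)
      · exact homcast ((isHomogeneous_X_pow (R := K) i0 n).mul (isHomogeneous_X_pow (R := K) i1 (r - 1))) (by omega)
    · have : G * X i1 ^ (r - 1) - X i0 ^ n * X i1 ^ (r - 1)
          = A * X i1 ^ r + (B * X i1 ^ (r - 1)) * X i2 := by
        have hrr : (X i1 : MvPolynomial (Fin 3) K) ^ r = X i1 ^ (r-1) * X i1 := by
          rw [← pow_succ]; congr 1; omega
        rw [hAB, hrr]; ring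
      rw [this]
      exact supp_add (supp_mul_X_pow A) (supp_mul_X _)
  rw [map_sub, h0, zero_sub, neg_eq_zero] at h1
  exact hne n (by omega) h1

/-- conditions of degree `d` monomials in the ideal of `A` -/
def UU (r s : ℕ) (m : Fin 3 →₀ ℕ) : Prop := Um 1 2 r m ∧ Um 0 1 s m

lemma Psi_filter {ι : Type} (S : Finset ι) (c : ι → K) (u : ι → Fin 3 → K)
    (q g : MvPolynomial (Fin 3) K) (T : Finset ι) (hT : T ⊆ S)
    (hz : ∀ i ∈ S, i ∉ T → eval (u i) q = 0) :
    Psi T (fun i => c i * eval (u i) q) u g = Psi S c u (g * q) := by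
  rw [Psi_apply, Psi_apply]
  rw [← Finset.sum_subset hT]
  · apply Finset.sum_congr rfl; intro i _; rw [map_mul]; ring
  · intro i hi hiT; rw [map_mul, hz i hi hiT]; ring

lemma monX (m : Fin 3 →₀ ℕ) (i : Fin 3) : monomial m (1:K) * X i = monomial (m + Finsupp.single i 1) 1 := by
  rw [X, monomial_mul, mul_one]

theorem core {ι : Type} (w d : ℕ) (hw : 3 ≤ w) (hd : 4 * w ≤ d + 1)
    (S : Finset ι) (c : ι → K) (u : ι → Fin 3 → K) (hS : NP S u)
    (hkill : ∀ m : Fin 3 →₀ ℕ, m.degree = d → UU w w m → Psi S c u (monomial m 1) = 0)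
    (h1 : Psi S c u (X 0 ^ (d + 1 - w) * X 1 ^ (w - 1)) ≠ 0)
    (h2 : Psi S c u (X 2 ^ (d + 1 - w) * X 0 ^ (w - 1)) ≠ 0) :
    2 * d + 3 ≤ S.card + 2 * w := by
  classical
  -- remove zero coefficients
  wlog hc : ∀ i ∈ S, c i ≠ 0 generalizing S
  · have hP : Psi S c u = Psi (S.filter (fun i => c i ≠ 0)) c u := by
      ext1 m; ext1
      simp only [LinearMap.comp_apply]
      rw [Psi_apply, Psi_apply]
      symm
      apply Finset.sum_subset (Finset.filter_subset _ _)
      intro i hi hi'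
      have : c i = 0 := by
        by_contra h; exact hi' (Finset.mem_filter.mpr ⟨hi, h⟩)
      rw [this, zero_mul]
    have := this (S.filter (fun i => c i ≠ 0)) (hS.mono (Finset.filter_subset _ _))
      (by rwa [← hP]) (by rwa [← hP]) (by rwa [← hP]) (fun i hi => (Finset.mem_filter.mp hi).2)
    have h3 := Finset.card_filter_le S (fun i => c i ≠ 0)
    omega
  by_contra hlt
  -- a general way to kill
  have hk : ∀ g : MvPolynomial (Fin 3) K, g.IsHomogeneous d → (∀ m ∈ g.support, UU w w m) →
    Psi S c u g = 0 := fun g hg hs => kill _ d _ hkill g hg hs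
  have hkm : ∀ m : Fin 3 →₀ ℕ, m.degree = d → UU w w m → Psi S c u (monomial m 1) = 0 := hkill
  -- bound for z
  have hdeg1 : ∀ (m : Fin 3 →₀ ℕ) (i : Fin 3), (m + Finsupp.single i 1).degree = m.degree + 1 := by
    intro m i; rw [map_add, Finsupp.degree_single]
  have key : ∀ (q : MvPolynomial (Fin 3) K) (k r : ℕ) (_ : 2 ≤ r) (i0 i1 i2 : Fin 3)
      (_ : i0 ≠ i1) (_ : i0 ≠ i2) (_ : i1 ≠ i2)
      (_ : ∀ m : Fin 3 →₀ ℕ, m.degree = k → Um i1 i2 r m → Psi S c u (monomial m 1 * q) = 0)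
      (_ : ∀ n, n + r = k + 1 → Psi S c u (X i0 ^ n * X i1 ^ (r - 1) * q) ≠ 0),
      k + 2 ≤ (S.filter (fun i => eval (u i) q ≠ 0)).card + r := by
    intro q k r hr i0 i1 i2 h01 h02 h12 hA hB
    have hf := Psi_filter S c u q (T := S.filter (fun i => eval (u i) q ≠ 0)) (hT := Finset.filter_subset _ _)
      (hz := by
        intro i hi hi'
        by_contra h; exact hi' (Finset.mem_filter.mpr ⟨hi, h⟩))
    apply lemQ _ (fun i => c i * eval (u i) q) u k r hr i0 i1 i2 h01 h02 h12
      (hS.mono (Finset.filter_subset _ _)).1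
    · intro m hm hU; rw [hf]; exact hA m hm hU
    · intro n hn; rw [hf]; exact hB n hn
  have hz := key (X 2) (d - 1) w (by omega) 2 0 1 (by decide) (by decide) (by decide)
    (by
      intro m hm hU
      rw [monX]
      apply hkm
      · rw [hdeg1]; omega
      · refine ⟨Or.inl (by simp), ?_⟩
        rcases hU with h | h
        · left; simpa using h
        · right; simpa using h)
    (by
      intro n hn
      have : (X 2 : MvPolynomial (Fin 3) K) ^ n * X 0 ^ (w - 1) * X 2
        = X 2 ^ (d + 1 - w) * X 0 ^ (w - 1) := by
        rw [show d + 1 - w = n + 1 by omega]; ring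
      rw [this]; exact h2)
  have hy := key (X 1) (d - 1) (w - 1) (by omega) 0 1 2 (by decide) (by decide) (by decide)
    (by
      intro m hm hU
      rw [monX]
      apply hkm
      · rw [hdeg1]; omega
      · refine ⟨?_, Or.inl (by simp)⟩
        rcases hU with h | h
        · left; simpa using h
        · right; simp; omega)
    (by
      intro n hn
      have : (X 0 : MvPolynomial (Fin 3) K) ^ n * X 1 ^ (w - 1 - 1) * X 1
        = X 0 ^ (d + 1 - w) * X 1 ^ (w - 1) := by
        rw [show d + 1 - w = n by omega, show w - 1 = (w - 1 - 1) + 1 by omega]; rw [Nat.add_sub_cancel]; ring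
      rw [this]; exact h1)
  simp only [eval_X] at hz hy
  set B := S.filter (fun i => u i 1 ≠ 0 ∧ u i 2 ≠ 0) with hB
  by_cases hBne : B.Nonempty
  · have hBS : B.card ≤ S.card := Finset.card_filter_le _ _
    obtain ⟨a, ha, T, hTB, hTc, hT0⟩ := points (d - 2) B u (fun i => c i * eval (u i) (X 1 * X 2))
      (hS.mono (Finset.filter_subset _ _))
      (by
        intro i hi
        obtain ⟨hi1, hi2, hi3⟩ := Finset.mem_filter.mp hi
        simp only [map_mul, eval_X]
        exact mul_ne_zero (hc i hi1) (mul_ne_zero hi2 hi3)) hBne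
      (by
        intro g hg
        have hf := Psi_filter S c u (X 1 * X 2) g (T := B) (hT := Finset.filter_subset _ _)
          (hz := by
            intro i hi hi'
            rw [map_mul, eval_X, eval_X]
            by_contra h
            exact hi' (Finset.mem_filter.mpr ⟨hi, left_ne_zero_of_mul h, right_ne_zero_of_mul h⟩))
        rw [Psi_apply] at hf
        rw [hf]
        apply hk
        · have := hg.mul ((isHomogeneous_X K (1 : Fin 3)).mul (isHomogeneous_X K (2 : Fin 3)))
          convert this using 1; omega
        · intro m hm
          refine ⟨Or.inl ?_, Or.inl ?_⟩
          · rw [← mul_assoc] at hm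
            rcases supp_mul_X (i1 := 1) (i2 := 2) (r := m 1 + 1) _ m hm with h | h
            · exact h
            · omega
          · rw [mul_comm (X 1), ← mul_assoc] at hm
            rcases supp_mul_X (i1 := 2) (i2 := 1) (r := m 2 + 1) _ m hm with h | h
            · exact h
            · omega) (by omega)
    have hTS : T ⊆ S := hTB.trans (Finset.filter_subset _ _)
    -- points off the line
    have hoff : (S.filter (fun i => eval (u i) (lin a * X 2) ≠ 0)).card + T.card ≤ S.card := by
      rw [← Finset.card_union_of_disjoint]
      · apply Finset.card_le_card
        exact Finset.union_subset (Finset.filter_subset _ _) hTS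
      · rw [Finset.disjoint_left]
        intro i hi hiT
        apply (Finset.mem_filter.mp hi).2
        rw [map_mul, eval_lin, hT0 i hiT, zero_mul]
    have hexp : ∀ g : MvPolynomial (Fin 3) K, g * (lin a * X 2) =
        a 0 • (g * X 0 * X 2) + a 1 • (g * X 1 * X 2) + a 2 • (g * X 2 * X 2) := by
      intro g
      simp only [lin, Fin.sum_univ_three, smul_eq_C_mul]; ring
    have hPe : ∀ g : MvPolynomial (Fin 3) K, Psi S c u (g * (lin a * X 2)) =
        a 0 * Psi S c u (g * X 0 * X 2) + a 1 * Psi S c u (g * X 1 * X 2)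
          + a 2 * Psi S c u (g * X 2 * X 2) := by
      intro g; rw [hexp]; simp only [map_add, map_smul, smul_eq_mul]
    have hX : ∀ (n k : ℕ) , (X 2 : MvPolynomial (Fin 3) K) ^ n * X 0 ^ k =
        monomial (Finsupp.single 2 n + Finsupp.single 0 k) 1 := by
      intro n k; rw [X_pow_eq_monomial, X_pow_eq_monomial, monomial_mul, mul_one]
    by_cases ha2 : a 2 = 0
    · have ha0 : a 0 ≠ 0 := by
        intro ha0
        have : T.Nonempty := Finset.card_pos.mp (by omega)
        obtain ⟨i, hi⟩ := this
        have h3 := hT0 i hi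
        rw [Fin.sum_univ_three, ha0, ha2] at h3
        have h4 := (Finset.mem_filter.mp (hTB hi)).2.1
        apply ha
        have h5 : a 1 = 0 := by
          rcases mul_eq_zero.mp (show a 1 * u i 1 = 0 by linear_combination h3) with h | h
          · exact h
          · exact absurd h h4
        ext j; fin_cases j
        · exact ha0
        · exact h5
        · exact ha2
      have := key (lin a * X 2) (d - 2) (w - 1) (by omega) 2 0 1 (by decide) (by decide) (by decide)
        (by
          intro m hm hU
          rw [hPe, ha2, monX, monX, monX, monX, hkm, hkm]
          · ring
          · rw [hdeg1, hdeg1]; omega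
          · exact ⟨Or.inl (by simp), Or.inl (by simp)⟩
          · rw [hdeg1, hdeg1]; omega
          · refine ⟨Or.inl (by simp), ?_⟩
            rcases hU with h | h
            · left; simpa using h
            · right; simp; omega)
        (by
          intro n hn
          rw [hPe, ha2, hX, monX, monX, monX, monX, hkm _ _ (_ : UU w w (_ + Finsupp.single 1 1 + _))]
          · have : Finsupp.single 2 n + Finsupp.single 0 (w - 1 - 1) + Finsupp.single 0 1 + Finsupp.single 2 1
              = (Finsupp.single 2 (d + 1 - w) + Finsupp.single 0 (w - 1) : Fin 3 →₀ ℕ) := by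
              rw [show d + 1 - w = n + 1 by omega]
              conv_rhs => rw [show w - 1 = (w - 1 - 1) + 1 by omega]
              rw [Finsupp.single_add, Finsupp.single_add]; abel
            rw [this, ← hX]
            simpa using ⟨ha0, h2⟩
          · rw [hdeg1, hdeg1]; simp only [map_add, Finsupp.degree_single]; omega
          · exact ⟨Or.inl (by simp), Or.inl (by simp)⟩)
      omega
    · have := key (lin a * X 2) (d - 2) w (by omega) 2 0 1 (by decide) (by decide) (by decide)
        (by
          intro m hm hU
          have hU' : Um 0 1 w m := hU
          have : ∀ j : Fin 3, UU w w (m + Finsupp.single j 1 + Finsupp.single 2 1) := by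
            intro j
            refine ⟨Or.inl (by simp), ?_⟩
            rcases hU with h | h
            · left; simp; omega
            · right; simp; omega
          rw [hPe, monX, monX, monX, monX, monX, monX, hkm _ _ (this _), hkm _ _ (this _), hkm _ _ (this _)]
          · ring
          all_goals (rw [hdeg1, hdeg1]; omega))
        (by
          intro n hn
          rw [hPe, hX, monX, monX, monX, monX, hkm _ _ (_ : UU w w (_ + Finsupp.single 0 1 + _)),
            hkm _ _ (_ : UU w w (_ + Finsupp.single 1 1 + _)), ← hX]
          · have : (X 2 : MvPolynomial (Fin 3) K) ^ n * X 0 ^ (w - 1) * X 2 * X 2 =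
              X 2 ^ (d + 1 - w) * X 0 ^ (w - 1) := by
              rw [show d + 1 - w = n + 2 by omega]; ring
            rw [this]; simpa using ⟨ha2, h2⟩
          · rw [hdeg1, hdeg1]; simp only [map_add, Finsupp.degree_single]; omega
          · exact ⟨Or.inl (by simp), Or.inl (by simp)⟩
          · rw [hdeg1, hdeg1]; simp only [map_add, Finsupp.degree_single]; omega
          · exact ⟨Or.inl (by simp), Or.inr (by simp; omega)⟩)
      omega
  · rw [Finset.not_nonempty_iff_eq_empty] at hBne
    have hdis : Disjoint (S.filter (fun i => u i 2 ≠ 0)) (S.filter (fun i => u i 1 ≠ 0)) := by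
      rw [Finset.disjoint_left]
      intro i hi hi'
      have : i ∈ B := Finset.mem_filter.mpr ⟨(Finset.mem_filter.mp hi).1,
        (Finset.mem_filter.mp hi').2, (Finset.mem_filter.mp hi).2⟩
      rw [hBne] at this; simp at this
    have h3 := Finset.card_union_of_disjoint hdis
    have h4 := Finset.card_le_card (Finset.union_subset (Finset.filter_subset (fun i => u i 2 ≠ 0) S)
      (Finset.filter_subset (fun i => u i 1 ≠ 0) S))
    omega

end core2
end V8

namespace V8
open MvPolynomial

section ideals
variable {K : Type} [Field K]

lemma Um_mono {i1 i2 : Fin 3} {r : ℕ} {m m' : Fin 3 →₀ ℕ} (h : m ≤ m') (hU : Um i1 i2 r m) :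
    Um i1 i2 r m' := by
  rcases hU with h' | h'
  · exact Or.inl (h'.trans (h i2))
  · exact Or.inr (h'.trans (h i1))

lemma mem_of_supp (J : Ideal (MvPolynomial (Fin 3) K)) (U : (Fin 3 →₀ ℕ) → Prop)
    (hU : ∀ m, U m → monomial m (1:K) ∈ J) (f : MvPolynomial (Fin 3) K)
    (hf : ∀ m ∈ f.support, U m) : f ∈ J := by
  rw [f.as_sum]
  apply Ideal.sum_mem
  intro m hm
  have : monomial m (coeff m f) = C (coeff m f) * monomial m (1 : K) := by
    rw [C_mul_monomial]; simp
  rw [this]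
  exact J.mul_mem_left _ (hU m (hf m hm))

lemma eq_two {i0 i1 i2 : Fin 3} (h01 : i0 ≠ i1) (h02 : i0 ≠ i2) (h12 : i1 ≠ i2)
    (m : Fin 3 →₀ ℕ) (h : m i2 = 0) :
    m = Finsupp.single i0 (m i0) + Finsupp.single i1 (m i1) := by
  have hall : ∀ j, j = i0 ∨ j = i1 ∨ j = i2 := by omega
  ext j
  rcases hall j with rfl | rfl | rfl
  · simp [Finsupp.single_eq_of_ne h01]
  · simp [Finsupp.single_eq_of_ne h01.symm]
  · rw [h]; simp [Finsupp.single_eq_of_ne h02.symm, Finsupp.single_eq_of_ne h12.symm]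

lemma lemD (J : Ideal (MvPolynomial (Fin 3) K)) (hh : IsHomogI (m := 2) J)
    (i0 i1 i2 : Fin 3) (h01 : i0 ≠ i1) (h02 : i0 ≠ i2) (h12 : i1 ≠ i2) (q r : ℕ)
    (hq : ∀ m : Fin 3 →₀ ℕ, q ≤ m i0 → Um i1 i2 r m → monomial m (1:K) ∈ J)
    (f : MvPolynomial (Fin 3) K) (hf : f ∈ J) (m : Fin 3 →₀ ℕ) (hm : m ∈ f.support)
    (hU : ¬ Um i1 i2 r m) : ∃ N, X i0 ^ N * X i1 ^ (r - 1) ∈ J := by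
  classical
  set g := homogeneousComponent m.degree f with hg
  have hgJ : g ∈ J := hh f hf _
  have hgh : g.IsHomogeneous m.degree := homogeneousComponent_isHomogeneous _ _
  have hmg : m ∈ g.support := by
    rw [mem_support_iff, hg, coeff_homogeneousComponent, if_pos rfl]
    exact mem_support_iff.mp hm
  obtain ⟨m0, hm0, hmin⟩ := Finset.exists_min_image (g.support.filter (fun m => ¬ Um i1 i2 r m))
    (fun m => m i1) ⟨m, Finset.mem_filter.mpr ⟨hmg, hU⟩⟩
  obtain ⟨hm0s, hm0U⟩ := Finset.mem_filter.mp hm0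
  have hm02 : m0 i2 = 0 := by
    by_contra h; exact hm0U (Or.inl (by omega))
  have hm01 : m0 i1 < r := by
    by_contra h; exact hm0U (Or.inr (by omega))
  set s := (Finsupp.single i0 q + Finsupp.single i1 (r - 1 - m0 i1) : Fin 3 →₀ ℕ) with hs
  have hs0 : s i0 = q := by simp [hs, Finsupp.single_eq_of_ne h01]
  have hs1 : s i1 = r - 1 - m0 i1 := by simp [hs, Finsupp.single_eq_of_ne h01.symm]
  have hJ1 : g * monomial s 1 ∈ J := J.mul_mem_right _ hgJ
  have hJ2 : g * monomial s 1 - monomial (m0 + s) (coeff m0 g) ∈ J := by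
    apply mem_of_supp J (fun m => q ≤ m i0 ∧ Um i1 i2 r m) (fun m h => hq m h.1 h.2)
    intro m' hm'
    rw [mem_support_iff, coeff_sub, coeff_mul_monomial', coeff_monomial] at hm'
    by_cases hsm : s ≤ m'
    · rw [if_pos hsm] at hm'
      obtain ⟨m1, rfl⟩ : ∃ m1, m' = m1 + s := ⟨m' - s, (tsub_add_cancel_of_le hsm).symm⟩
      refine ⟨by rw [Finsupp.add_apply, hs0]; omega, ?_⟩
      rw [add_tsub_cancel_right, mul_one] at hm'
      by_cases h01' : m0 = m1
      · subst h01'; simp at hm'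
      · rw [if_neg (by simpa using h01'), sub_zero] at hm'
        by_cases hUm1 : Um i1 i2 r m1
        · exact Um_mono (by simp) hUm1
        · have hm1s : m1 ∈ g.support := mem_support_iff.mpr hm'
          have hle := hmin m1 (Finset.mem_filter.mpr ⟨hm1s, hUm1⟩)
          have hm12 : m1 i2 = 0 := by
            by_contra h; exact hUm1 (Or.inl (by omega))
          have hne : m1 i1 ≠ m0 i1 := by
            intro he
            apply h01'
            have e0 := eq_two h01 h02 h12 m0 hm02
            have e1 := eq_two h01 h02 h12 m1 hm12
            have d0 := hom_deg hgh hm0s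
            have d1 := hom_deg hgh hm1s
            rw [e0, map_add, Finsupp.degree_single, Finsupp.degree_single] at d0
            rw [e1, map_add, Finsupp.degree_single, Finsupp.degree_single] at d1
            rw [e0, e1, he, show m0 i0 = m1 i0 by omega]
          right
          rw [Finsupp.add_apply, hs1]; omega
    · rw [if_neg hsm, if_neg] at hm'
      · simp at hm'
      · intro h; apply hsm; rw [← h]; simp
  have hJ3 : monomial (m0 + s) (coeff m0 g) ∈ J := by
    have := J.sub_mem hJ1 hJ2
    simpa using this
  have hc := mem_support_iff.mp hm0s
  have hJ4 : monomial (m0 + s) (1:K) ∈ J := by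
    have := J.mul_mem_left (C (coeff m0 g)⁻¹) hJ3
    rwa [C_mul_monomial, inv_mul_cancel₀ hc] at this
  refine ⟨m0 i0 + q, ?_⟩
  rw [X_pow_eq_monomial, X_pow_eq_monomial, monomial_mul, mul_one]
  convert hJ4 using 2
  have hms2 : (m0 + s) i2 = 0 := by
    simp [hs, hm02, Finsupp.single_eq_of_ne h02.symm, Finsupp.single_eq_of_ne h12.symm]
  have he := eq_two h01 h02 h12 (m0 + s) hms2
  have k0 : (m0 + s) i0 = m0 i0 + q := by rw [← hs0]; rfl
  have k1 : (m0 + s) i1 = r - 1 := by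
    have : (m0 + s) i1 = m0 i1 + s i1 := rfl
    omega
  rw [he, k0, k1]

lemma descent (J : Ideal (MvPolynomial (Fin 3) K)) (hs : IsSatI (m := 2) J)
    (i0 i1 i2 : Fin 3) (h01 : i0 ≠ i1) (h02 : i0 ≠ i2) (h12 : i1 ≠ i2) (s k0 N : ℕ)
    (h1 : ∀ k, k0 ≤ k → X i1 * (X i0 ^ k * X i1 ^ s) ∈ J)
    (h2 : ∀ k, k0 ≤ k → X i2 * (X i0 ^ k * X i1 ^ s) ∈ J)
    (hN : X i0 ^ N * X i1 ^ s ∈ J) : X i0 ^ k0 * X i1 ^ s ∈ J := by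
  have hall : ∀ j, j = i0 ∨ j = i1 ∨ j = i2 := by omega
  have : ∀ n, X i0 ^ (k0 + n) * X i1 ^ s ∈ J → X i0 ^ k0 * X i1 ^ s ∈ J := by
    intro n
    induction n with
    | zero => exact id
    | succ n ih =>
      intro h
      apply ih
      apply hs
      intro j
      rcases hall j with rfl | rfl | rfl
      · convert h using 1; ring
      · exact h1 _ (by omega)
      · exact h2 _ (by omega)
  by_cases h : k0 ≤ N
  · apply this (N - k0); rwa [Nat.add_sub_cancel' h]
  · have := J.mul_mem_left (X i0 ^ (k0 - N)) hN
    rwa [← mul_assoc, ← pow_add, Nat.sub_add_cancel (by omega)] at this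

lemma stdIdeal (J : Ideal (MvPolynomial (Fin 3) K)) (hh : IsHomogI (m := 2) J)
    (hs : IsSatI (m := 2) J)
    (i0 i1 i2 : Fin 3) (h01 : i0 ≠ i1) (h02 : i0 ≠ i2) (h12 : i1 ≠ i2) (N : ℕ)
    (h2 : X i2 ∈ J) (h1 : X i1 ^ N ∈ J) :
    ∃ r, ∀ f, f ∈ J ↔ ∀ m ∈ f.support, Um i1 i2 r m := by
  classical
  have hex : ∃ r, X i1 ^ r ∈ J := ⟨N, h1⟩
  set r := Nat.find hex with hr
  have hrJ : X i1 ^ r ∈ J := Nat.find_spec hex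
  have hmon : ∀ m : Fin 3 →₀ ℕ, Um i1 i2 r m → monomial m (1:K) ∈ J := by
    intro m hm
    rcases hm with h | h
    · have : monomial m (1:K) = monomial (m - Finsupp.single i2 1) 1 * X i2 := by
        rw [monX, tsub_add_cancel_of_le]
        simpa using h
      rw [this]; exact J.mul_mem_left _ h2
    · have : monomial m (1:K) = monomial (m - Finsupp.single i1 r) 1 * X i1 ^ r := by
        rw [X_pow_eq_monomial, monomial_mul, tsub_add_cancel_of_le, mul_one]
        simpa using h
      rw [this]; exact J.mul_mem_left _ hrJ
  refine ⟨r, fun f => ⟨?_, fun hf => mem_of_supp J _ hmon f hf⟩⟩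
  intro hf m hm
  by_contra hU
  obtain ⟨M, hM⟩ := lemD J hh i0 i1 i2 h01 h02 h12 0 r (fun m _ => hmon m) f hf m hm hU
  have hr0 : r ≠ 0 := by
    intro h; apply hU; right; omega
  have := descent J hs i0 i1 i2 h01 h02 h12 (r - 1) 0 M
    (by
      intro k _
      have : (X i1 : MvPolynomial (Fin 3) K) * (X i0 ^ k * X i1 ^ (r - 1)) = X i0 ^ k * X i1 ^ r := by
        conv_rhs => rw [show r = (r - 1) + 1 by omega]
        ring
      rw [this]; exact J.mul_mem_left _ hrJ)
    (fun k _ => J.mul_mem_right _ h2) hM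
  rw [pow_zero, one_mul] at this
  exact Nat.find_min hex (m := r - 1) (by omega) this

/-! change of coordinates -/

/-- dual bases -/
structure DB (a b : Fin 3 → Fin 3 → K) : Prop where
  h1 : ∀ i k, ∑ j, a i j * b k j = if i = k then 1 else 0
  h2 : ∀ j k, ∑ i, b i j * a i k = if j = k then 1 else 0

/-- substitution -/
noncomputable def sub (a : Fin 3 → Fin 3 → K) : MvPolynomial (Fin 3) K →ₐ[K] MvPolynomial (Fin 3) K :=
  aeval (fun i => lin (a i))

lemma sub_hom (a : Fin 3 → Fin 3 → K) {f : MvPolynomial (Fin 3) K} {n : ℕ}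
    (hf : f.IsHomogeneous n) : (sub a f).IsHomogeneous n := by
  have := hf.aeval (fun i => lin (a i)) (fun i => lin_hom (a i))
  exact homcast this (by omega)

lemma sub_hc (a : Fin 3 → Fin 3 → K) (f : MvPolynomial (Fin 3) K) (n : ℕ) :
    homogeneousComponent n (sub a f) = sub a (homogeneousComponent n f) := by
  conv_lhs => rw [← sum_homogeneousComponent f]
  rw [map_sum, map_sum]
  have : ∀ i, homogeneousComponent n (sub a (homogeneousComponent i f)) =
      if i = n then sub a (homogeneousComponent i f) else 0 := by
    intro i
    rw [homogeneousComponent_of_mem (sub_hom a (homogeneousComponent_isHomogeneous i f))]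
    simp [eq_comm]
  simp only [this]
  rw [Finset.sum_ite_eq']
  split_ifs with h
  · rfl
  · rw [homogeneousComponent_eq_zero, map_zero]
    simp at h; omega

lemma eval_sub (a : Fin 3 → Fin 3 → K) (f : MvPolynomial (Fin 3) K) (v : Fin 3 → K) :
    eval v (sub a f) = eval (fun i => ∑ j, a i j * v j) f := by
  induction f using MvPolynomial.induction_on with
  | C c => simp [sub]
  | add p q hp hq => simp [hp, hq]
  | mul_X p i hp => rw [map_mul, map_mul, map_mul, hp]; simp [sub, eval_lin]

lemma DB.symm {a b : Fin 3 → Fin 3 → K} (h : DB a b) : DB (fun j i => b i j) (fun j i => a i j) :=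
  ⟨fun i k => h.h2 i k, fun j k => h.h1 j k⟩

lemma sub_sub {a b : Fin 3 → Fin 3 → K} (h : DB a b) (f : MvPolynomial (Fin 3) K) :
    sub a (sub (fun j i => b i j) f) = f := by
  induction f using MvPolynomial.induction_on with
  | C c => simp [sub]
  | add p q hp hq => simp [hp, hq]
  | mul_X p i hp =>
    rw [map_mul, map_mul, hp]; congr 1
    simp only [sub, aeval_X, lin, map_sum, map_mul, algHom_C, algebraMap_eq, Finset.mul_sum]
    rw [Finset.sum_comm]
    simp only [← mul_assoc, ← Finset.sum_mul, ← C_mul, ← map_sum, h.h2]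
    simp

lemma sub_sub' {a b : Fin 3 → Fin 3 → K} (h : DB a b) (f : MvPolynomial (Fin 3) K) :
    sub (fun j i => b i j) (sub a f) = f := sub_sub h.symm f

lemma comap_homog (a : Fin 3 → Fin 3 → K) (J : Ideal (MvPolynomial (Fin 3) K))
    (hh : IsHomogI (m := 2) J) : IsHomogI (m := 2) (J.comap (sub a)) := by
  intro f hf n
  rw [Ideal.mem_comap] at hf ⊢
  have := hh _ hf n
  rwa [sub_hc] at this

lemma comap_sat {a b : Fin 3 → Fin 3 → K} (h : DB a b) (J : Ideal (MvPolynomial (Fin 3) K))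
    (hs : IsSatI (m := 2) J) : IsSatI (m := 2) (J.comap (sub a)) := by
  intro f hf
  rw [Ideal.mem_comap]
  apply hs
  intro j
  have : X j * sub a f = sub a (sub (fun j i => b i j) (X j) * f) := by
    rw [map_mul, sub_sub h]
  rw [this, ← Ideal.mem_comap]
  simp only [sub, aeval_X, lin, Finset.sum_mul, mul_assoc]
  apply Ideal.sum_mem
  intro i _
  apply Ideal.mul_mem_left
  exact hf i

lemma hilbQ_eq (J : Ideal (PR K 2)) (t : ℕ) {V : Type} [AddCommGroup V] [Module K V]
    (g : Hd K 2 t →ₗ[K] V) (hg : ∀ f, g f = 0 ↔ (f : PR K 2) ∈ J) (hsurj : Function.Surjective g) :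
    hilbQ J t = Module.finrank K V := by
  unfold hilbQ
  set φ := (Ideal.Quotient.mkₐ K J).toLinearMap.comp (Hd K 2 t).subtype with hφ
  have h1 : (Hd K 2 t).map (Ideal.Quotient.mkₐ K J).toLinearMap = LinearMap.range φ := by
    rw [hφ, LinearMap.range_comp, Submodule.range_subtype]
  have h2 : LinearMap.ker φ = LinearMap.ker g := by
    ext f
    rw [LinearMap.mem_ker, LinearMap.mem_ker, hg]
    simp [hφ, Ideal.Quotient.eq_zero_iff_mem]
  rw [h1, ← LinearEquiv.finrank_eq φ.quotKerEquivRange, h2,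
    LinearEquiv.finrank_eq (g.quotKerEquivOfSurjective hsurj)]

/-- the line coefficients -/
noncomputable def mm (i0 i1 : Fin 3) (d n : ℕ) : Fin 3 →₀ ℕ :=
  Finsupp.single i0 (d - n) + Finsupp.single i1 n

lemma hilb_std {a b : Fin 3 → Fin 3 → K} (h : DB a b) (J : Ideal (PR K 2))
    (i0 i1 i2 : Fin 3) (h01 : i0 ≠ i1) (h02 : i0 ≠ i2) (h12 : i1 ≠ i2) (r : ℕ)
    (hJ : ∀ f, sub a f ∈ J ↔ ∀ m ∈ f.support, Um i1 i2 r m) (t : ℕ) (ht : r ≤ t) :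
    hilbQ J t = r := by
  classical
  let g : Hd K 2 t →ₗ[K] (Fin r → K) := LinearMap.pi (fun i =>
    (lcoeff K (mm i0 i1 t i)) ∘ₗ (sub (fun j i => b i j)).toLinearMap ∘ₗ (Hd K 2 t).subtype)
  have hgv : ∀ f i, g f i = coeff (mm i0 i1 t i) (sub (fun j i => b i j) f.1) := by
    intro f i; rfl
  rw [hilbQ_eq J t g, Module.finrank_fin_fun]
  · intro f
    have hfh : (sub (fun j i => b i j) f.1).IsHomogeneous t := sub_hom _ f.2
    have : (f : PR K 2) ∈ J ↔ ∀ m ∈ (sub (fun j i => b i j) f.1).support, Um i1 i2 r m := by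
      rw [← hJ, sub_sub h]
    rw [this]
    constructor
    · intro h0 m hm
      by_contra hU
      have hm2 : m i2 = 0 := by by_contra h'; exact hU (Or.inl (by omega))
      have hm1 : m i1 < r := by by_contra h'; exact hU (Or.inr (by omega))
      have hd := hom_deg hfh hm
      have he := eq_two h01 h02 h12 m hm2
      have := congrFun h0 ⟨m i1, hm1⟩
      rw [hgv] at this
      apply mem_support_iff.mp hm
      rw [he] at hd
      simp only [map_add, Finsupp.degree_single] at hd
      have h5 : mm i0 i1 t (m i1) = m := by
        unfold mm; rw [show t - m i1 = m i0 by omega]; exact he.symm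
      simpa [h5] using this
    · intro h0
      ext i
      rw [hgv]
      by_contra hne
      have := h0 _ (mem_support_iff.mpr hne)
      rcases this with h | h
      · simp [mm, Finsupp.single_eq_of_ne h02.symm, Finsupp.single_eq_of_ne h12.symm] at h
      · simp [mm, Finsupp.single_eq_of_ne h01.symm] at h
        have := i.2
        omega
  · intro v
    let p : MvPolynomial (Fin 3) K := ∑ i : Fin r, monomial (mm i0 i1 t i) (v i)
    have hp : p.IsHomogeneous t := by
      apply IsHomogeneous.sum
      intro i _
      apply isHomogeneous_monomial
      have := i.2
      simp only [mm, map_add, Finsupp.degree_single]; omega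
    refine ⟨⟨sub a p, sub_hom a hp⟩, ?_⟩
    ext i
    rw [hgv]
    simp only [sub_sub' h]
    simp only [p, coeff_sum, coeff_monomial]
    rw [Finset.sum_eq_single i]
    · simp
    · intro j _ hj
      rw [if_neg]
      intro he
      apply hj
      have := DFunLike.congr_fun he i1
      simp [mm, Finsupp.single_eq_of_ne h01.symm] at this
      exact Fin.ext this
    · simp

lemma deg_std {a b : Fin 3 → Fin 3 → K} (h : DB a b) (J : Ideal (PR K 2))
    (i0 i1 i2 : Fin 3) (h01 : i0 ≠ i1) (h02 : i0 ≠ i2) (h12 : i1 ≠ i2) (r : ℕ)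
    (hJ : ∀ f, sub a f ∈ J ↔ ∀ m ∈ f.support, Um i1 i2 r m) : idealDeg J = r := by
  unfold idealDeg
  rw [Filter.limsup_congr (v := fun _ => r), Filter.limsup_const]
  filter_upwards [Filter.eventually_ge_atTop r] with t ht
  exact hilb_std h J i0 i1 i2 h01 h02 h12 r hJ t ht

end ideals
end V8

namespace V8
open MvPolynomial

section trans
variable {K : Type} [Field K]

lemma nu_apply (d : ℕ) (v : Fin 3 → K) (f : Hd K 2 d) : nu d v f = eval v f.1 := by
  simp [nu, aeval_eq_eval]

lemma hom_eval_smul {f : MvPolynomial (Fin 3) K} {n : ℕ} (hf : f.IsHomogeneous n) (c : K)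
    (v : Fin 3 → K) : eval (c • v) f = c ^ n * eval v f := by
  rw [f.as_sum, map_sum, map_sum, Finset.mul_sum]
  apply Finset.sum_congr rfl
  intro m hm
  have hd := hom_deg hf hm
  rw [eval_monomial, eval_monomial, ← hd]
  rw [Finsupp.prod_fintype _ _ (by simp), Finsupp.prod_fintype _ _ (by simp)]
  simp only [Pi.smul_apply, smul_eq_mul, mul_pow,
    Finset.prod_mul_distrib, Finset.prod_pow_eq_pow_sum, Finsupp.degree_eq_sum]
  ring

lemma nu_smul (d : ℕ) (c : K) (v : Fin 3 → K) : nu (m := 2) d (c • v) = c ^ d • nu d v := by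
  ext f
  rw [nu_apply, LinearMap.smul_apply, nu_apply, smul_eq_mul]
  exact hom_eval_smul f.2 c v

lemma nu_ne (d : ℕ) (v : Fin 3 → K) (hv : v ≠ 0) : nu (m := 2) d v ≠ 0 := by
  intro h
  obtain ⟨i, hi⟩ := Function.ne_iff.mp hv
  have := LinearMap.congr_fun h (⟨X i ^ d, isHomogeneous_X_pow _ _⟩ : Hd K 2 d)
  rw [nu_apply] at this
  simp at this
  exact hi this.1

lemma of_span (d : ℕ) (S : Finset (PN K 2 d)) (hS : (S : Set (PN K 2 d)) ⊆ XSet K 2 d)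
    (φ : Module.Dual K (Hd K 2 d))
    (h : φ ∈ Submodule.span K (Projectivization.rep '' (S : Set (PN K 2 d)))) :
    ∃ (c : PN K 2 d → K) (v : PN K 2 d → Fin 3 → K), NP S v ∧ φ = ∑ Q ∈ S, c Q • nu d (v Q) := by
  classical
  have hS' : ∀ Q : PN K 2 d, ∃ a : Pm K 2, Q ∈ S → Q.submodule = Submodule.span K {nu d a.rep} := by
    intro Q
    by_cases hQ : Q ∈ S
    · obtain ⟨a, ha⟩ := hS hQ
      exact ⟨a, fun _ => ha⟩
    · exact ⟨Projectivization.mk K (fun _ => 1) (by intro h; simpa using congrFun h 0),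
        fun h => absurd h hQ⟩
  choose a ha using hS'
  have hre : ∀ Q : PN K 2 d, ∃ t : K, Q ∈ S → Q.rep = t • nu d (a Q).rep := by
    intro Q
    by_cases hQ : Q ∈ S
    · have : Q.rep ∈ Submodule.span K {nu d (a Q).rep} := by
        rw [← ha Q hQ, Projectivization.submodule_eq]
        exact Submodule.mem_span_singleton_self _
      obtain ⟨t, ht⟩ := Submodule.mem_span_singleton.mp this
      exact ⟨t, fun _ => ht.symm⟩
    · exact ⟨0, fun h => absurd h hQ⟩
  choose t ht using hre
  obtain ⟨c, hc⟩ : ∃ c : PN K 2 d → K, φ = ∑ Q ∈ S, c Q • Q.rep := by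
    have := (Submodule.mem_span_image_finset_iff_exists_fun' (R := K) (v := Projectivization.rep) (s := S) (x := φ)).mp h
    obtain ⟨c, hc⟩ := this
    exact ⟨c, hc.symm⟩
  refine ⟨fun Q => c Q * t Q, fun Q => (a Q).rep, ⟨fun Q _ => (a Q).rep_nonzero, ?_⟩, ?_⟩
  · intro Q hQ Q' hQ' hne s hs
    apply hne
    simp only at hs
    apply Projectivization.submodule_injective
    rw [ha Q hQ, ha Q' hQ', hs, nu_smul]
    apply Submodule.span_singleton_smul_eq
    apply IsUnit.pow
    rw [isUnit_iff_ne_zero]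
    rintro rfl
    rw [zero_smul] at hs
    exact (a Q).rep_nonzero hs
  · rw [hc]
    apply Finset.sum_congr rfl
    intro Q hQ
    rw [ht Q hQ, smul_smul]

lemma to_span {ι : Type} (d : ℕ) (T : Finset ι) (c : ι → K) (v : ι → Fin 3 → K)
    (hv : ∀ i ∈ T, v i ≠ 0) :
    ∃ S : Finset (PN K 2 d), (S : Set (PN K 2 d)) ⊆ XSet K 2 d ∧ S.card ≤ T.card ∧
      ∑ i ∈ T, c i • nu d (v i) ∈
        Submodule.span K (Projectivization.rep '' (S : Set (PN K 2 d))) := by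
  classical
  let Q : {i // i ∈ T} → PN K 2 d := fun i => Projectivization.mk K (nu d (v i.1)) (nu_ne d _ (hv _ i.2))
  refine ⟨T.attach.image Q, ?_, ?_, ?_⟩
  · intro q hq
    simp only [Finset.coe_image, Set.mem_image] at hq
    obtain ⟨i, _, rfl⟩ := hq
    refine ⟨Projectivization.mk K (v i.1) (hv _ i.2), ?_⟩
    rw [Projectivization.submodule_mk]
    obtain ⟨s, hs⟩ := Projectivization.exists_smul_eq_mk_rep K (v i.1) (hv _ i.2)
    rw [← hs, Units.smul_def, nu_smul]
    symm
    exact Submodule.span_singleton_smul_eq (s.isUnit.pow d) _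
  · exact Finset.card_image_le.trans (by simp)
  · apply Submodule.sum_mem
    intro i hi
    apply Submodule.smul_mem
    obtain ⟨s, hs⟩ := Projectivization.exists_smul_eq_mk_rep K (nu d (v i)) (nu_ne d _ (hv _ hi))
    have : nu d (v i) = (s⁻¹ : Kˣ) • (Q ⟨i, hi⟩).rep := by
      rw [← hs, inv_smul_smul]
    rw [this, Units.smul_def]
    apply Submodule.smul_mem
    apply Submodule.subset_span
    exact ⟨_, by simp, rfl⟩

/-- projection to degree d -/
noncomputable def hproj (d : ℕ) : MvPolynomial (Fin 3) K →ₗ[K] Hd K 2 d :=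
  LinearMap.codRestrict (Hd K 2 d) (homogeneousComponent d)
    (fun f => homogeneousComponent_isHomogeneous d f)

/-- functional in new coordinates -/
noncomputable def pull (a : Fin 3 → Fin 3 → K) (d : ℕ) (φ : Module.Dual K (Hd K 2 d)) :
    MvPolynomial (Fin 3) K →ₗ[K] K := φ ∘ₗ hproj d ∘ₗ (sub a).toLinearMap

lemma pull_hom (a : Fin 3 → Fin 3 → K) (d : ℕ) (φ : Module.Dual K (Hd K 2 d))
    (f : MvPolynomial (Fin 3) K) (hf : f.IsHomogeneous d) :
    pull a d φ f = φ ⟨sub a f, sub_hom a hf⟩ := by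
  unfold pull
  simp only [LinearMap.comp_apply]
  congr 1
  apply Subtype.ext
  show homogeneousComponent d (sub a f) = sub a f
  rw [homogeneousComponent_of_mem (sub_hom a hf)]; simp

lemma pull_nu {ι : Type} (a : Fin 3 → Fin 3 → K) (d : ℕ) (S : Finset ι) (c : ι → K)
    (v : ι → Fin 3 → K) (f : MvPolynomial (Fin 3) K) (hf : f.IsHomogeneous d) :
    pull a d (∑ i ∈ S, c i • nu d (v i)) f = Psi S c (fun s i => ∑ j, a i j * v s j) f := by
  rw [pull_hom _ _ _ _ hf, Psi_apply]
  simp only [LinearMap.sum_apply, LinearMap.smul_apply, nu_apply, smul_eq_mul, eval_sub]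

lemma DB.vec {a b : Fin 3 → Fin 3 → K} (h : DB a b) (v : Fin 3 → K) (k : Fin 3) :
    ∑ i, b i k * (∑ j, a i j * v j) = v k := by
  simp only [Finset.mul_sum, ← mul_assoc]
  rw [Finset.sum_comm]
  simp only [← Finset.sum_mul, h.h2]
  simp

lemma NP_trans {ι : Type} {a b : Fin 3 → Fin 3 → K} (h : DB a b) (S : Finset ι)
    (v : ι → Fin 3 → K) (hv : NP S v) : NP S (fun s i => ∑ j, a i j * v s j) := by
  refine ⟨fun s hs h0 => hv.1 s hs ?_, fun s hs s' hs' hne t ht => hv.2 s hs s' hs' hne t ?_⟩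
  · ext k
    rw [← h.vec (v s) k]
    simp only [fun i => congrFun h0 i]; simp
  · ext k
    rw [← h.vec (v s) k, Pi.smul_apply, ← h.vec (v s') k]
    simp only [fun i => congrFun ht i, Pi.smul_apply, smul_eq_mul, Finset.mul_sum]
    apply Finset.sum_congr rfl; intro i _
    apply Finset.sum_congr rfl; intro i _; ring

lemma hom_mm (i0 i1 : Fin 3) (p q d : ℕ) (h : p + q = d) :
    (X i0 ^ p * X i1 ^ q : MvPolynomial (Fin 3) K).IsHomogeneous d := by
  have := (isHomogeneous_X_pow (R := K) i0 p).mul (isHomogeneous_X_pow (R := K) i1 q)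
  exact homcast this h

/-- lower bound on rank -/
lemma rank_low {a b : Fin 3 → Fin 3 → K} (h : DB a b) (w d : ℕ) (hw : 3 ≤ w) (hd : 4 * w ≤ d + 1)
    (φ : Module.Dual K (Hd K 2 d))
    (hkill : ∀ m : Fin 3 →₀ ℕ, m.degree = d → UU w w m → pull a d φ (monomial m 1) = 0)
    (h1 : pull a d φ (X 0 ^ (d + 1 - w) * X 1 ^ (w - 1)) ≠ 0)
    (h2 : pull a d φ (X 2 ^ (d + 1 - w) * X 0 ^ (w - 1)) ≠ 0)
    (S : Finset (PN K 2 d)) (hS : (S : Set (PN K 2 d)) ⊆ XSet K 2 d)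
    (hφ : φ ∈ Submodule.span K (Projectivization.rep '' (S : Set (PN K 2 d)))) :
    2 * d + 3 ≤ S.card + 2 * w := by
  obtain ⟨c, v, hv, rfl⟩ := of_span d S hS φ hφ
  apply core w d hw hd S c _ (NP_trans h S v hv)
  · intro m hm hU
    rw [← pull_nu _ d]
    · exact hkill m hm hU
    · exact isHomogeneous_monomial _ hm
  · rw [← pull_nu _ d]
    · exact h1
    · exact hom_mm _ _ _ _ _ (by omega)
  · rw [← pull_nu _ d]
    · exact h2
    · exact hom_mm _ _ _ _ _ (by omega)

end trans
end V8

namespace V8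
open MvPolynomial

section setup
variable {K : Type} [Field K]

lemma mkDB (b : Fin 3 → Fin 3 → K) (hb : LinearIndependent K b) : ∃ a, DB a b := by
  let B : Matrix (Fin 3) (Fin 3) K := b
  have hu : IsUnit B := Matrix.linearIndependent_rows_iff_isUnit.mp hb
  have hdet : IsUnit B.det := (Matrix.isUnit_iff_isUnit_det B).mp hu
  refine ⟨fun i j => B⁻¹ j i, ⟨?_, ?_⟩⟩
  · intro i k
    have := congrFun (congrFun (Matrix.mul_nonsing_inv B hdet) k) i
    rw [Matrix.mul_apply, Matrix.one_apply] at this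
    simp only [eq_comm (a := i), ← this]
    apply Finset.sum_congr rfl; intro j _; rw [mul_comm]
  · intro j k
    have := congrFun (congrFun (Matrix.nonsing_inv_mul B hdet) k) j
    rw [Matrix.mul_apply, Matrix.one_apply] at this
    simp only [eq_comm (a := j), ← this]
    apply Finset.sum_congr rfl; intro j _; rw [mul_comm]

lemma rep_mem (p : Pm K 2) (W : Submodule K (Fin 3 → K)) : p.submodule ≤ W ↔ p.rep ∈ W := by
  rw [Projectivization.submodule_eq, Submodule.span_singleton_le_iff_mem]

lemma span_two (W : Submodule K (Fin 3 → K)) (hW : Module.finrank K W = 2) (u v : Fin 3 → K)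
    (hu : u ∈ W) (hv : v ∈ W) (hi : LinearIndependent K ![u, v]) : W = Submodule.span K {u, v} := by
  symm
  apply Submodule.eq_of_le_of_finrank_eq
  · rw [Submodule.span_le]
    rintro x (rfl | rfl) <;> assumption
  · have := finrank_span_eq_card hi
    rw [Matrix.range_cons, Matrix.range_cons, Matrix.range_empty, Set.union_empty,
      Set.singleton_union] at this
    rw [this, hW]; simp

lemma setup (L1 L2 : Set (Pm K 2)) (hL1 : IsLine L1) (hL2 : IsLine L2)
    (O : Pm K 2) (hO : L1 ∩ L2 = {O}) (O2 : Pm K 2) (hO2 : O2 ∈ L2) (hO2O : O2 ≠ O) :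
    ∃ a b : Fin 3 → Fin 3 → K, DB a b ∧ b 0 = O.rep ∧ b 2 = O2.rep ∧
      (∀ p ∈ L1, ∑ j, a 2 j * p.rep j = 0) ∧ (∀ p ∈ L2, ∑ j, a 1 j * p.rep j = 0) := by
  obtain ⟨W1, hW1, rfl⟩ := hL1
  obtain ⟨W2, hW2, rfl⟩ := hL2
  have hOm : O ∈ ({O} : Set (Pm K 2)) := rfl
  rw [← hO] at hOm
  have hO1 : O.rep ∈ W1 := (rep_mem _ _).mp hOm.1
  have hO2' : O.rep ∈ W2 := (rep_mem _ _).mp hOm.2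
  have hQ2 : O2.rep ∈ W2 := (rep_mem _ _).mp hO2
  have hQ1 : O2.rep ∉ W1 := by
    intro h
    have : O2 ∈ ({O} : Set (Pm K 2)) := by rw [← hO]; exact ⟨(rep_mem _ _).mpr h, hO2⟩
    exact hO2O this
  obtain ⟨e, heW, he⟩ : ∃ e ∈ W1, e ∉ Submodule.span K {O.rep} := by
    by_contra hcon
    push Not at hcon
    have h1 : W1 ≤ Submodule.span K {O.rep} := hcon
    have := Submodule.finrank_mono h1
    rw [hW1, finrank_span_singleton O.rep_nonzero] at this
    omega
  have i1 : LinearIndependent K ![O.rep, e] := by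
    rw [LinearIndependent.pair_iff' O.rep_nonzero]
    intro t ht
    exact he (Submodule.mem_span_singleton.mpr ⟨t, ht⟩)
  have i2 : LinearIndependent K ![O.rep, O2.rep] := by
    rw [LinearIndependent.pair_iff' O.rep_nonzero]
    intro t ht
    apply hQ1
    rw [← ht]; exact W1.smul_mem _ hO1
  have e1 := span_two W1 hW1 _ _ hO1 heW i1
  have e2 := span_two W2 hW2 _ _ hO2' hQ2 i2
  have i3 : LinearIndependent K ![O.rep, e, O2.rep] := by
    have : LinearIndependent K (Fin.snoc ![O.rep, e] O2.rep : Fin 3 → Fin 3 → K) := by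
      rw [linearIndependent_finSnoc]
      refine ⟨i1, ?_⟩
      rwa [Matrix.range_cons, Matrix.range_cons, Matrix.range_empty, Set.union_empty,
        Set.singleton_union, ← e1]
    convert this using 1
    ext i j; fin_cases i <;> rfl
  obtain ⟨a, hab⟩ := mkDB _ i3
  have key : ∀ (i : Fin 3) (u v : Fin 3 → K), (∑ j, a i j * u j = 0) → (∑ j, a i j * v j = 0) → ∀ x ∈ Submodule.span K {u, v},
      ∑ j, a i j * x j = 0 := by
    intro i u v hu hv x hx
    obtain ⟨s, t, rfl⟩ := Submodule.mem_span_pair.mp hx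
    have : ∑ j, a i j * (s • u + t • v) j = s * ∑ j, a i j * u j + t * ∑ j, a i j * v j := by
      simp only [Finset.mul_sum, ← Finset.sum_add_distrib]
      apply Finset.sum_congr rfl; intro j _; simp; ring
    rw [this, hu, hv]; simp
  refine ⟨a, _, hab, rfl, rfl, ?_, ?_⟩
  · intro p hp
    have hp' : p.rep ∈ W1 := (rep_mem _ _).mp hp
    rw [e1] at hp'
    exact key 2 _ _ (by simpa using hab.h1 2 0) (by simpa using hab.h1 2 1) _ hp'
  · intro p hp
    have hp' : p.rep ∈ W2 := (rep_mem _ _).mp hp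
    rw [e2] at hp'
    exact key 1 _ _ (by simpa using hab.h1 1 0) (by simpa using hab.h1 1 2) _ hp'

lemma ideal_id [IsAlgClosed K] {a b : Fin 3 → Fin 3 → K} (h : DB a b) (A : PSub K 2)
    (L : Set (Pm K 2)) (hAL : idealOfSet L ≤ A.I) (Q : Pm K 2) (hsup : pzeroLocus A.I = {Q})
    (w : ℕ) (hdeg : idealDeg A.I = w)
    (i0 i1 i2 : Fin 3) (h01 : i0 ≠ i1) (h02 : i0 ≠ i2) (h12 : i1 ≠ i2)
    (hb : b i0 = Q.rep) (hl : ∀ p ∈ L, ∑ j, a i2 j * p.rep j = 0) :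
    ∀ f, sub a f ∈ A.I ↔ ∀ m ∈ f.support, Um i1 i2 w m := by
  have hX2 : X i2 ∈ A.I.comap (sub a) := by
    rw [Ideal.mem_comap]
    apply hAL
    apply Ideal.subset_span
    refine ⟨⟨1, sub_hom a (isHomogeneous_X _ _)⟩, ?_⟩
    intro p hp
    rw [eval_sub, eval_X]; exact hl p hp
  have hrad : sub a (X i1) ∈ A.I.radical := by
    rw [← vanishingIdeal_zeroLocus_eq_radical (k := K) (K := K) A.I, mem_vanishingIdeal_iff]
    intro v hv
    rw [aeval_eq_eval]
    change eval v (sub a (X i1)) = 0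
    rw [eval_sub, eval_X]
    by_cases hv0 : v = 0
    · subst hv0; simp
    have hmem : Projectivization.mk K v hv0 ∈ pzeroLocus A.I := by
      intro f hf n
      obtain ⟨s, hs⟩ := Projectivization.exists_smul_eq_mk_rep K v hv0
      rw [← hs, Units.smul_def, hom_eval_smul (homogeneousComponent_isHomogeneous n f)]
      have := hv _ (A.homog f hf n)
      rw [aeval_eq_eval] at this
      change eval v (homogeneousComponent n f) = 0 at this
      rw [this, mul_zero]
    rw [hsup] at hmem
    have he : Projectivization.mk K v hv0 = Q := hmem
    obtain ⟨s, hs⟩ := Projectivization.exists_smul_eq_mk_rep K v hv0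
    rw [he, ← hb] at hs
    have h0 := h.h1 i1 i0
    rw [if_neg h01.symm, ← hs] at h0
    have : (s:K) * ∑ j, a i1 j * v j = 0 := by
      rw [← h0, Finset.mul_sum]
      apply Finset.sum_congr rfl; intro j _
      rw [Units.smul_def, Pi.smul_apply, smul_eq_mul]; ring
    simpa using this
  obtain ⟨N, hN⟩ := hrad
  have hX1 : X i1 ^ N ∈ A.I.comap (sub a) := by
    rw [Ideal.mem_comap, map_pow]; exact hN
  obtain ⟨r, hr⟩ := stdIdeal (A.I.comap (sub a)) (comap_homog a _ A.homog) (comap_sat h _ A.sat)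
    i0 i1 i2 h01 h02 h12 N hX2 hX1
  have hdr := deg_std h A.I i0 i1 i2 h01 h02 h12 r hr
  rw [hdeg] at hdr
  subst hdr
  exact hr

lemma UU_mono {r s : ℕ} {m m' : Fin 3 →₀ ℕ} (h : m ≤ m') (hU : UU r s m) : UU r s m' :=
  ⟨Um_mono h hU.1, Um_mono h hU.2⟩

/-- monomial ideal -/
noncomputable def MI (K : Type) [Field K] (r s : ℕ) : Ideal (MvPolynomial (Fin 3) K) where
  carrier := {f | ∀ m ∈ f.support, UU r s m}
  zero_mem' := by simp
  add_mem' := by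
    classical
    intro f g hf hg m hm
    rcases Finset.mem_union.mp (support_add hm) with h | h
    · exact hf m h
    · exact hg m h
  smul_mem' := by
    classical
    intro c f hf m hm
    rw [smul_eq_mul] at hm
    obtain ⟨p, _, q, hq, rfl⟩ := Finset.mem_add.mp (support_mul c f hm)
    exact UU_mono (by simp) (hf q hq)

lemma MI_homog (r s : ℕ) : IsHomogI (m := 2) (MI K r s) := by
  classical
  intro f hf n m hm
  apply hf m
  rw [mem_support_iff, coeff_homogeneousComponent] at hm
  rw [mem_support_iff]
  intro h0; rw [h0] at hm; simp at hm

lemma MI_sat (r s : ℕ) : IsSatI (m := 2) (MI K r s) := by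
  intro f hf m hm
  have key : ∀ i, UU r s (Finsupp.single i 1 + m) := by
    intro i
    apply hf i
    rw [mem_support_iff, X, coeff_monomial_mul, one_mul]
    exact mem_support_iff.mp hm
  have k0 := (key 0).1
  have k2 := (key 2).2
  simp only [Um, Finsupp.add_apply, Finsupp.single_apply] at k0 k2
  simp at k0 k2
  exact ⟨k0, k2⟩

lemma pull_supp (a : Fin 3 → Fin 3 → K) (d : ℕ) (φ : Module.Dual K (Hd K 2 d))
    (U : (Fin 3 →₀ ℕ) → Prop)
    (hz : ∀ m : Fin 3 →₀ ℕ, m.degree = d → U m → pull a d φ (monomial m 1) = 0)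
    (g : MvPolynomial (Fin 3) K) (hg : g.IsHomogeneous d) (hU : ∀ m ∈ g.support, U m) :
    pull a d φ g = 0 := by
  rw [g.as_sum, map_sum]
  apply Finset.sum_eq_zero
  intro m hm
  have : monomial m (coeff m g) = (coeff m g) • monomial m (1:K) := by
    rw [smul_monomial, smul_eq_mul, mul_one]
  rw [this, map_smul, hz m (hom_deg hg hm) (hU m hm), smul_zero]

lemma min_gen {a b : Fin 3 → Fin 3 → K} (h : DB a b) (I : Ideal (PR K 2)) (w d : ℕ)
    (hI : ∀ f, sub a f ∈ I ↔ ∀ m ∈ f.support, UU w w m)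
    (φ : Module.Dual K (Hd K 2 d)) (r s : ℕ) (hr : r ≤ w) (hs : s ≤ w)
    (m0 : Fin 3 →₀ ℕ) (hm0 : UU r s m0) (hm0' : ¬ UU w w m0)
    (hz : ∀ m : Fin 3 →₀ ℕ, m.degree = d → UU r s m → pull a d φ (monomial m 1) = 0) :
    ∃ A' : PSub K 2, I < A'.I ∧ φ ∈ schemeSpanSub A'.I d := by
  classical
  refine ⟨⟨(MI K r s).comap (sub (fun j i => b i j)), comap_homog _ _ (MI_homog r s),
    comap_sat h.symm _ (MI_sat r s)⟩, ?_, ?_⟩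
  · rw [SetLike.lt_iff_le_and_exists]
    refine ⟨?_, sub a (monomial m0 1), ?_, ?_⟩
    · intro f hf
      rw [← sub_sub h f, hI] at hf
      intro m hm
      obtain ⟨h1, h2⟩ := hf m hm
      exact ⟨h1.imp id (fun h => by omega), h2.imp id (fun h => by omega)⟩
    · rw [Ideal.mem_comap, sub_sub' h]
      intro m hm
      have := support_monomial_subset hm
      rw [Finset.mem_singleton] at this
      rwa [this]
    · rw [hI]
      intro hc
      exact hm0' (hc m0 (by rw [mem_support_iff]; simp))
  · intro f hf
    have hfh : (sub (fun j i => b i j) f.1).IsHomogeneous d := sub_hom _ f.2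
    have h1 := pull_supp a d φ (UU r s) hz (sub (fun j i => b i j) f.1) hfh (fun m hm => hf m hm)
    rw [pull_hom _ _ _ _ hfh] at h1
    rw [← h1]
    congr 1
    apply Subtype.ext
    exact (sub_sub h f.1).symm

lemma kill_of_mem {a b : Fin 3 → Fin 3 → K} (h : DB a b) (I : Ideal (PR K 2)) (w d : ℕ)
    (hI : ∀ f, sub a f ∈ I ↔ ∀ m ∈ f.support, UU w w m)
    (φ : Module.Dual K (Hd K 2 d)) (hφ : φ ∈ schemeSpanSub I d) :
    ∀ m : Fin 3 →₀ ℕ, m.degree = d → UU w w m → pull a d φ (monomial m 1) = 0 := by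
  intro m hm hU
  rw [pull_hom _ _ _ _ (isHomogeneous_monomial _ hm)]
  apply hφ
  rw [hI]
  intro m' hm'
  have := support_monomial_subset hm'
  rw [Finset.mem_singleton] at this
  rwa [this]

lemma XX (i0 i1 : Fin 3) (p q : ℕ) : (X i0 ^ p * X i1 ^ q : MvPolynomial (Fin 3) K) =
    monomial (Finsupp.single i0 p + Finsupp.single i1 q) 1 := by
  rw [X_pow_eq_monomial, X_pow_eq_monomial, monomial_mul, mul_one]

lemma H1_of_min {a b : Fin 3 → Fin 3 → K} (h : DB a b) (I : Ideal (PR K 2)) (w d : ℕ)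
    (hw : 3 ≤ w) (hd : 4 * w ≤ d + 1)
    (hI : ∀ f, sub a f ∈ I ↔ ∀ m ∈ f.support, UU w w m)
    (φ : Module.Dual K (Hd K 2 d)) (hφ : φ ∈ schemeSpanSub I d)
    (hmin : ∀ A' : PSub K 2, I < A'.I → φ ∉ schemeSpanSub A'.I d) :
    pull a d φ (X 0 ^ (d + 1 - w) * X 1 ^ (w - 1)) ≠ 0 ∧
    pull a d φ (X 2 ^ (d + 1 - w) * X 0 ^ (w - 1)) ≠ 0 := by
  have hk := kill_of_mem h I w d hI φ hφ
  constructor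
  · intro h0
    obtain ⟨A', h1, h2⟩ := min_gen h I w d hI φ (w - 1) w (by omega) le_rfl
      (Finsupp.single 1 (w - 1)) (by simp [UU, Um]; omega) (by simp [UU, Um]; omega) (by
        intro m hm hU
        by_cases hW : UU w w m
        · exact hk m hm hW
        · rw [Finsupp.degree_eq_sum, Fin.sum_univ_three] at hm
          have : ¬ Um 1 2 w m := fun h => hW ⟨h, hU.2⟩
          have hU1 := hU.1
          unfold Um at this hU1
          rw [eq_two (i0 := 0) (i1 := 1) (i2 := 2) (by decide) (by decide) (by decide) m (by omega), ← XX,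
            show m 0 = d + 1 - w by omega, show m 1 = w - 1 by omega, h0])
    exact hmin A' h1 h2
  · intro h0
    obtain ⟨A', h1, h2⟩ := min_gen h I w d hI φ w (w - 1) le_rfl (by omega)
      (Finsupp.single 2 1 + Finsupp.single 0 (w - 1)) (by simp [UU, Um]) (by simp [UU, Um]; omega) (by
        intro m hm hU
        by_cases hW : UU w w m
        · exact hk m hm hW
        · rw [Finsupp.degree_eq_sum, Fin.sum_univ_three] at hm
          have : ¬ Um 0 1 w m := fun h => hW ⟨hU.1, h⟩
          have hU1 := hU.2
          unfold Um at this hU1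
          rw [eq_two (i0 := 2) (i1 := 0) (i2 := 1) (by decide) (by decide) (by decide) m (by omega), ← XX,
            show m 2 = d + 1 - w by omega, show m 0 = w - 1 by omega, h0])
    exact hmin A' h1 h2

lemma min_ex {a b : Fin 3 → Fin 3 → K} (h : DB a b) (I : Ideal (PR K 2)) (w d : ℕ)
    (hw : 3 ≤ w) (hd : 4 * w ≤ d + 1)
    (hI : ∀ f, sub a f ∈ I ↔ ∀ m ∈ f.support, UU w w m)
    (φ : Module.Dual K (Hd K 2 d))
    (h1 : pull a d φ (X 0 ^ (d + 1 - w) * X 1 ^ (w - 1)) ≠ 0)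
    (h2 : pull a d φ (X 2 ^ (d + 1 - w) * X 0 ^ (w - 1)) ≠ 0) 
    (A' : PSub K 2) (hA : I < A'.I) : φ ∉ schemeSpanSub A'.I d := by
  intro hφ
  set J := A'.I.comap (sub a) with hJ
  have hJh : IsHomogI (m := 2) J := comap_homog a _ A'.homog
  have hJs : IsSatI (m := 2) J := comap_sat h _ A'.sat
  have hmon : ∀ m : Fin 3 →₀ ℕ, UU w w m → monomial m (1:K) ∈ J := by
    intro m hU
    rw [hJ, Ideal.mem_comap]
    apply hA.le
    rw [hI]
    intro m' hm'
    have := support_monomial_subset hm'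
    rw [Finset.mem_singleton] at this
    rwa [this]
  have hpull : ∀ g : MvPolynomial (Fin 3) K, g.IsHomogeneous d → g ∈ J → pull a d φ g = 0 := by
    intro g hg hgJ
    rw [pull_hom _ _ _ _ hg]
    exact hφ _ hgJ
  obtain ⟨f, hf, hfI⟩ := (SetLike.lt_iff_le_and_exists.mp hA).2
  rw [← sub_sub h f, hI] at hfI
  push Not at hfI
  obtain ⟨m, hm, hU⟩ := hfI
  have hg : sub (fun j i => b i j) f ∈ J := by
    rw [hJ, Ideal.mem_comap, sub_sub h]; exact hf
  by_cases hU1 : Um 1 2 w m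
  · have hU2 : ¬ Um 0 1 w m := fun h => hU ⟨hU1, h⟩
    obtain ⟨N, hN⟩ := lemD J hJh 2 0 1 (by decide) (by decide) (by decide) w w
      (fun m hm hU => hmon m ⟨Or.inl (by omega), hU⟩) _ hg m hm hU2
    have := descent J hJs 2 0 1 (by decide) (by decide) (by decide) (w - 1) (d + 1 - w) N
      (by
        intro k hk
        rw [XX, mul_comm, monX]
        apply hmon
        simp [UU, Um]; omega)
      (by
        intro k hk
        rw [XX, mul_comm, monX]
        apply hmon
        simp [UU, Um]; omega) hN
    exact h2 (hpull _ (hom_mm _ _ _ _ _ (by omega)) this)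
  · obtain ⟨N, hN⟩ := lemD J hJh 0 1 2 (by decide) (by decide) (by decide) w w
      (fun m hm hU => hmon m ⟨hU, Or.inr hm⟩) _ hg m hm hU1
    have := descent J hJs 0 1 2 (by decide) (by decide) (by decide) (w - 1) (d + 1 - w) N
      (by
        intro k hk
        rw [XX, mul_comm, monX]
        apply hmon
        simp [UU, Um]; omega)
      (by
        intro k hk
        rw [XX, mul_comm, monX]
        apply hmon
        simp [UU, Um]; omega) hN
    exact h1 (hpull _ (hom_mm _ _ _ _ _ (by omega)) this)

end setup
end V8

namespace V8
open MvPolynomial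

section border
variable {K : Type} [Field K]

/-- coefficient functional -/
noncomputable def cf (b : Fin 3 → Fin 3 → K) (i0 i1 : Fin 3) (d n : ℕ) : Module.Dual K (Hd K 2 d) :=
  (lcoeff K (mm i0 i1 d n)) ∘ₗ (sub (fun j i => b i j)).toLinearMap ∘ₗ (Hd K 2 d).subtype

lemma cf_apply (b : Fin 3 → Fin 3 → K) (i0 i1 : Fin 3) (d n : ℕ) (f : Hd K 2 d) :
    cf b i0 i1 d n f = coeff (mm i0 i1 d n) (sub (fun j i => b i j) f.1) := rfl

lemma mm_0 {i0 i1 : Fin 3} (h01 : i0 ≠ i1) (d n : ℕ) : mm i0 i1 d n i0 = d - n := by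
  simp [mm, Finsupp.single_eq_of_ne h01]
lemma mm_1 {i0 i1 : Fin 3} (h01 : i0 ≠ i1) (d n : ℕ) : mm i0 i1 d n i1 = n := by
  simp [mm, Finsupp.single_eq_of_ne h01.symm]
lemma mm_2 {i0 i1 i2 : Fin 3} (h02 : i0 ≠ i2) (h12 : i1 ≠ i2) (d n : ℕ) : mm i0 i1 d n i2 = 0 := by
  simp [mm, Finsupp.single_eq_of_ne h02.symm, Finsupp.single_eq_of_ne h12.symm]

lemma eq_mm {i0 i1 i2 : Fin 3} (h01 : i0 ≠ i1) (h02 : i0 ≠ i2) (h12 : i1 ≠ i2)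
    (m : Fin 3 →₀ ℕ) (h : m i2 = 0) (d : ℕ) (hd : m.degree = d) :
    m i1 ≤ d ∧ m = mm i0 i1 d (m i1) := by
  have he := eq_two h01 h02 h12 m h
  have hd' := hd
  rw [he, map_add, Finsupp.degree_single, Finsupp.degree_single] at hd'
  refine ⟨by omega, ?_⟩
  unfold mm
  rw [show d - m i1 = m i0 by omega]; exact he

lemma eval_line {i0 i1 i2 : Fin 3} (h01 : i0 ≠ i1) (h02 : i0 ≠ i2) (h12 : i1 ≠ i2)
    (d : ℕ) (g : MvPolynomial (Fin 3) K) (hg : g.IsHomogeneous d) (p : Fin 3 → K) (t : K)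
    (p0 : p i0 = 1) (p1 : p i1 = t) (p2 : p i2 = 0) :
    eval p g = ∑ n ∈ Finset.range (d + 1), t ^ n * coeff (mm i0 i1 d n) g := by
  classical
  have key : ∀ m : Fin 3 →₀ ℕ, m.degree = d → ∀ c : K, eval p (monomial m c) =
      ∑ n ∈ Finset.range (d + 1), t ^ n * coeff (mm i0 i1 d n) (monomial m c) := by
    intro m hm c
    by_cases h2 : m i2 = 0
    · obtain ⟨hle, he⟩ := eq_mm h01 h02 h12 m h2 d hm
      rw [Finset.sum_eq_single (m i1)]
      · rw [← he, coeff_monomial, if_pos rfl, eval_monomial, mul_comm]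
        congr 1
        rw [eq_two h01 h02 h12 m h2, Finsupp.prod_add_index' (by simp) (by intros; rw [pow_add]),
          Finsupp.prod_single_index (by simp), Finsupp.prod_single_index (by simp), p0, p1]
        simp [Finsupp.single_eq_of_ne h01.symm]
      · intro n _ hn
        rw [coeff_monomial, if_neg, mul_zero]
        intro hmn
        apply hn
        rw [hmn, mm_1 h01]
      · intro h; simp at h; omega
    · rw [eval_monomial, Finsupp.prod_fintype _ _ (by simp),
        Finset.prod_eq_zero (Finset.mem_univ i2) (by rw [p2, zero_pow h2]), mul_zero]
      symm
      apply Finset.sum_eq_zero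
      intro n _
      rw [coeff_monomial, if_neg, mul_zero]
      intro hmn
      apply h2; rw [hmn, mm_2 h02 h12]
  conv_lhs => rw [g.as_sum, map_sum]
  rw [Finset.sum_congr rfl (fun m hm => key m (hom_deg hg hm) _), Finset.sum_comm]
  apply Finset.sum_congr rfl
  intro n _
  conv_rhs => rw [g.as_sum, coeff_sum, Finset.mul_sum]

lemma nu_line {a b : Fin 3 → Fin 3 → K} (h : DB a b) {i0 i1 i2 : Fin 3} (h01 : i0 ≠ i1)
    (h02 : i0 ≠ i2) (h12 : i1 ≠ i2) (d : ℕ) (t : K) :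
    nu d (b i0 + t • b i1) = ∑ n ∈ Finset.range (d + 1), t ^ n • cf b i0 i1 d n := by
  ext f
  have hfh : (sub (fun j i => b i j) f.1).IsHomogeneous d := sub_hom _ f.2
  rw [nu_apply, ← sub_sub h f.1, eval_sub,
    eval_line h01 h02 h12 d _ hfh _ t]
  · simp [LinearMap.sum_apply, cf_apply]
  all_goals
    simp only [Pi.add_apply, Pi.smul_apply, smul_eq_mul, mul_add, Finset.sum_add_distrib,
      mul_left_comm _ t]
    rw [← Finset.mul_sum, h.h1, h.h1]
    simp [h01, h01.symm, h02.symm, h12.symm]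

lemma RU {N : ℕ} (ζ : K) (hζ : IsPrimitiveRoot ζ N) (e : ℕ) :
    ∑ j ∈ Finset.range N, ζ ^ (j * e) = if N ∣ e then (N:K) else 0 := by
  split_ifs with hd
  · have : ζ ^ e = 1 := (hζ.pow_eq_one_iff_dvd e).mpr hd
    simp [mul_comm _ e, pow_mul, this]
  · have h1 : ζ ^ e - 1 ≠ 0 := by
      intro h; apply hd
      exact (hζ.pow_eq_one_iff_dvd e).mp (sub_eq_zero.mp h)
    have := geom_sum_mul (ζ ^ e) N
    rw [← pow_mul, mul_comm e N, pow_mul, hζ.pow_eq_one, one_pow, sub_self] at this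
    simp only [mul_comm _ e, pow_mul]
    exact (mul_eq_zero.mp this).resolve_right h1

lemma fourier [CharZero K] {a b : Fin 3 → Fin 3 → K} (h : DB a b) {i0 i1 i2 : Fin 3} (h01 : i0 ≠ i1)
    (h02 : i0 ≠ i2) (h12 : i1 ≠ i2) (d N : ℕ) (hN : 0 < N) (ζ : K) (hζ : IsPrimitiveRoot ζ N)
    (D : ℕ → K) (t : K) (ht : t ≠ 0) : ∃ C : ℕ → K,
    ∑ n ∈ Finset.range (d + 1), (t ^ (N * (n / N)) * D (n % N)) • cf b i0 i1 d n =
    ∑ j ∈ Finset.range N, C j • nu d (b i0 + (t * ζ ^ j) • b i1) := by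
  have hN0 : (N : K) ≠ 0 := by exact_mod_cast hN.ne'
  refine ⟨fun j => (N:K)⁻¹ * ∑ i ∈ Finset.range N, D i * (t ^ i)⁻¹ * ζ ^ (j * (N - i)), ?_⟩
  simp only [nu_line h h01 h02 h12, Finset.smul_sum, smul_smul]
  rw [Finset.sum_comm]
  apply Finset.sum_congr rfl
  intro n _
  rw [← Finset.sum_smul]
  congr 1
  have e1 : ∀ j, (N:K)⁻¹ * (∑ i ∈ Finset.range N, D i * (t ^ i)⁻¹ * ζ ^ (j * (N - i))) * (t * ζ ^ j) ^ n
      = ∑ i ∈ Finset.range N, (N:K)⁻¹ * (D i * (t ^ i)⁻¹ * t ^ n) * ζ ^ (j * (N - i + n)) := by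
    intro j
    rw [Finset.mul_sum, Finset.sum_mul]
    apply Finset.sum_congr rfl
    intro i _
    rw [mul_pow, ← pow_mul, mul_add, pow_add]; ring
  simp only [e1]
  rw [Finset.sum_comm]
  simp only [← Finset.mul_sum, RU ζ hζ]
  rw [Finset.sum_eq_single (n % N)]
  · have hlt := Nat.mod_lt n hN
    have hdm := Nat.div_add_mod n N
    rw [if_pos]
    · have : t ^ n = t ^ (N * (n / N)) * t ^ (n % N) := by rw [← pow_add, hdm]
      rw [this]
      field_simp
    · refine ⟨n / N + 1, ?_⟩
      rw [mul_add]; omega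
  · intro i hi hne
    rw [if_neg, mul_zero]
    intro hd
    apply hne
    have hi' := Finset.mem_range.mp hi
    have h3 : (N - i + n) ≡ 0 [MOD N] := (Nat.modEq_zero_iff_dvd).mpr hd
    have h4 : n ≡ i [MOD N] := by
      have h5 := h3.add_right i
      rw [show N - i + n + i = N + n by omega, zero_add] at h5
      simpa [Nat.ModEq] using h5
    unfold Nat.ModEq at h4
    rw [h4, Nat.mod_eq_of_lt hi']
  · intro hn; exact absurd (Finset.mem_range.mpr (Nat.mod_lt n hN)) hn

lemma vec_ne {a b : Fin 3 → Fin 3 → K} (h : DB a b) {i0 i1 : Fin 3} (h01 : i0 ≠ i1) (t : K) :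
    b i0 + t • b i1 ≠ 0 := by
  intro h0
  have : ∑ j, a i0 j * (b i0 + t • b i1) j = 0 := by rw [h0]; simp
  simp only [Pi.add_apply, Pi.smul_apply, smul_eq_mul, mul_add, Finset.sum_add_distrib,
      mul_left_comm _ t] at this
  rw [← Finset.mul_sum, h.h1, h.h1] at this
  simp [h01] at this

/-- coefficients on a line -/
noncomputable def lc (a : Fin 3 → Fin 3 → K) (d : ℕ) (φ : Module.Dual K (Hd K 2 d)) (i0 i1 : Fin 3)
    (n : ℕ) : K := pull a d φ (monomial (mm i0 i1 d n) 1)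

lemma decomp {a b : Fin 3 → Fin 3 → K} (h : DB a b) (w d : ℕ) (hw : 3 ≤ w) (hd : 4 * w ≤ d + 1)
    (φ : Module.Dual K (Hd K 2 d))
    (hk : ∀ m : Fin 3 →₀ ℕ, m.degree = d → UU w w m → pull a d φ (monomial m 1) = 0) :
    φ = ∑ n ∈ Finset.range w, lc a d φ 0 1 n • cf b 0 1 d n +
      ∑ n ∈ Finset.range w, lc a d φ 2 0 n • cf b 2 0 d n := by
  classical
  have key : ∀ m : Fin 3 →₀ ℕ, m.degree = d → pull a d φ (monomial m 1) =
      ∑ n ∈ Finset.range w, lc a d φ 0 1 n * coeff (mm 0 1 d n) (monomial m (1:K)) +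
      ∑ n ∈ Finset.range w, lc a d φ 2 0 n * coeff (mm 2 0 d n) (monomial m (1:K)) := by
    intro m hm
    simp only [coeff_monomial]
    have z1 : Um 1 2 w m → ∑ n ∈ Finset.range w, lc a d φ 0 1 n * (if m = mm 0 1 d n then (1:K) else 0) = 0 := by
      intro hU
      apply Finset.sum_eq_zero
      intro n hn
      rw [if_neg, mul_zero]
      rintro rfl
      unfold Um at hU
      rw [mm_1 (by decide), mm_2 (by decide) (by decide)] at hU
      have := Finset.mem_range.mp hn
      omega
    have z2 : Um 0 1 w m → ∑ n ∈ Finset.range w, lc a d φ 2 0 n * (if m = mm 2 0 d n then (1:K) else 0) = 0 := by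
      intro hU
      apply Finset.sum_eq_zero
      intro n hn
      rw [if_neg, mul_zero]
      rintro rfl
      unfold Um at hU
      rw [mm_1 (by decide), mm_2 (by decide) (by decide)] at hU
      have := Finset.mem_range.mp hn
      omega
    by_cases hU1 : Um 1 2 w m
    · by_cases hU2 : Um 0 1 w m
      · rw [hk m hm ⟨hU1, hU2⟩, z1 hU1, z2 hU2, add_zero]
      · rw [z1 hU1, zero_add]
        unfold Um at hU2
        obtain ⟨_, he⟩ := eq_mm (i0 := 2) (i1 := 0) (i2 := 1) (by decide) (by decide) (by decide) m (by omega) d hm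
        rw [Finset.sum_eq_single (m 0)]
        · rw [if_pos he, mul_one]; unfold lc; rw [← he]
        · intro n _ hn
          rw [if_neg, mul_zero]
          intro hmn; apply hn; rw [hmn, mm_1 (by decide)]
        · intro hn; exfalso; apply hn; rw [Finset.mem_range]; omega
    · unfold Um at hU1
      obtain ⟨hle, he⟩ := eq_mm (i0 := 0) (i1 := 1) (i2 := 2) (by decide) (by decide) (by decide) m (by omega) d hm
      have hm0 : m 0 = d - m 1 := by conv_lhs => rw [he, mm_0 (by decide)]
      rw [z2 (Or.inr (by omega)), add_zero]
      rw [Finset.sum_eq_single (m 1)]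
      · rw [if_pos he, mul_one]; unfold lc; rw [← he]
      · intro n _ hn
        rw [if_neg, mul_zero]
        intro hmn; apply hn; rw [hmn, mm_1 (by decide)]
      · intro hn; exfalso; apply hn; rw [Finset.mem_range]; omega
  have key2 : ∀ g : MvPolynomial (Fin 3) K, g.IsHomogeneous d → pull a d φ g =
      ∑ n ∈ Finset.range w, lc a d φ 0 1 n * coeff (mm 0 1 d n) g +
      ∑ n ∈ Finset.range w, lc a d φ 2 0 n * coeff (mm 2 0 d n) g := by
    intro g hg
    have e : ∀ m ∈ g.support, pull a d φ (monomial m (coeff m g)) =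
        ∑ n ∈ Finset.range w, lc a d φ 0 1 n * coeff (mm 0 1 d n) (monomial m (coeff m g)) +
      ∑ n ∈ Finset.range w, lc a d φ 2 0 n * coeff (mm 2 0 d n) (monomial m (coeff m g)) := by
      intro m hm
      have : monomial m (coeff m g) = (coeff m g) • monomial m (1:K) := by
        rw [smul_monomial, smul_eq_mul, mul_one]
      rw [this, map_smul, key m (hom_deg hg hm)]
      simp only [coeff_smul, smul_eq_mul, mul_left_comm _ (coeff m g), ← Finset.mul_sum]
      rw [mul_add]
    conv_lhs => rw [g.as_sum, map_sum]
    rw [Finset.sum_congr rfl e, Finset.sum_add_distrib]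
    congr 1
    all_goals
      rw [Finset.sum_comm]
      apply Finset.sum_congr rfl
      intro n _
      conv_rhs => rw [g.as_sum, coeff_sum, Finset.mul_sum]
  ext f
  have hfh : (sub (fun j i => b i j) f.1).IsHomogeneous d := sub_hom _ f.2
  have h1 := key2 _ hfh
  rw [pull_hom _ _ _ _ hfh] at h1
  have h2 : (⟨sub a (sub (fun j i => b i j) f.1), sub_hom a hfh⟩ : Hd K 2 d) = f :=
    Subtype.ext (sub_sub h f.1)
  rw [h2] at h1
  rw [h1]
  simp [LinearMap.sum_apply, cf_apply]

/-- the curve -/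
noncomputable def gam (b : Fin 3 → Fin 3 → K) (d N : ℕ) (D E : ℕ → K) (t : K) : Module.Dual K (Hd K 2 d) :=
  ∑ n ∈ Finset.range (d + 1), (t ^ (N * (n / N)) * D (n % N)) • cf b 0 1 d n +
  ∑ n ∈ Finset.range (d + 1), (t ^ (N * (n / N)) * E (n % N)) • cf b 2 0 d n

lemma gam_zero (b : Fin 3 → Fin 3 → K) (d N : ℕ) (hN : 0 < N) (hNd : N ≤ d + 1) (D E : ℕ → K) :
    gam b d N D E 0 = ∑ n ∈ Finset.range N, D n • cf b 0 1 d n +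
      ∑ n ∈ Finset.range N, E n • cf b 2 0 d n := by
  unfold gam
  congr 1
  all_goals
    symm
    apply Finset.sum_subset_zero_on_sdiff
    · intro n hn; simp at hn ⊢; omega
    · intro n hn
      simp only [Finset.mem_sdiff, Finset.mem_range] at hn
      have : 0 < n / N := Nat.div_pos (by omega) hN
      rw [zero_pow (by positivity), zero_mul, zero_smul]
    · intro n hn
      have hn' := Finset.mem_range.mp hn
      rw [Nat.div_eq_of_lt hn', Nat.mod_eq_of_lt hn', mul_zero, pow_zero, one_mul]

lemma gam_sum [CharZero K] {a b : Fin 3 → Fin 3 → K} (h : DB a b) (d N M : ℕ) (hN : 0 < N) (hM : 0 < M)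
    (ζ η : K) (hζ : IsPrimitiveRoot ζ N) (hη : IsPrimitiveRoot η M) (D E : ℕ → K) (t : K) (ht : t ≠ 0) :
    ∃ (c : ℕ ⊕ ℕ → K) (v : ℕ ⊕ ℕ → Fin 3 → K), (∀ i, v i ≠ 0) ∧
    ∑ n ∈ Finset.range (d + 1), (t ^ (N * (n / N)) * D (n % N)) • cf b 0 1 d n +
    ∑ n ∈ Finset.range (d + 1), (t ^ (M * (n / M)) * E (n % M)) • cf b 2 0 d n =
    ∑ i ∈ (Finset.range N).disjSum (Finset.range M), c i • nu d (v i) := by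
  obtain ⟨C, hC⟩ := fourier h (i0 := 0) (i1 := 1) (i2 := 2) (by decide) (by decide) (by decide) d N hN ζ hζ D t ht
  obtain ⟨C', hC'⟩ := fourier h (i0 := 2) (i1 := 0) (i2 := 1) (by decide) (by decide) (by decide) d M hM η hη E t ht
  refine ⟨Sum.elim C C', Sum.elim (fun j => b 0 + (t * ζ ^ j) • b 1) (fun j => b 2 + (t * η ^ j) • b 0), ?_, ?_⟩
  · rintro (j | j)
    · exact vec_ne h (by decide) _
    · exact vec_ne h (by decide) _
  · rw [hC, hC', Finset.sum_disjSum]; simp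

lemma poly_curve (b : Fin 3 → Fin 3 → K) (d N : ℕ) (D E : ℕ → K) (c : K)
    (F : Module.Dual K (Hd K 2 d) → K) (hF : F ∈ polyFunctions K (Module.Dual K (Hd K 2 d))) :
    ∃ p : Polynomial K, ∀ t, F (c • gam b d N D E t) = p.eval t := by
  unfold polyFunctions at hF
  induction hF using Algebra.adjoin_induction with
  | mem F hF =>
    obtain ⟨φ, rfl⟩ := hF
    refine ⟨Polynomial.C c * (∑ n ∈ Finset.range (d + 1), Polynomial.X ^ (N * (n / N)) * Polynomial.C (D (n % N) * φ (cf b 0 1 d n)) +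
      ∑ n ∈ Finset.range (d + 1), Polynomial.X ^ (N * (n / N)) * Polynomial.C (E (n % N) * φ (cf b 2 0 d n))), ?_⟩
    intro t
    simp [gam, Polynomial.eval_finsetSum, mul_assoc, mul_add]
  | algebraMap r => exact ⟨Polynomial.C r, by simp⟩
  | add f g _ _ hf hg =>
    obtain ⟨p, hp⟩ := hf
    obtain ⟨q, hq⟩ := hg
    exact ⟨p + q, by simp [hp, hq]⟩
  | mul f g _ _ hf hg =>
    obtain ⟨p, hp⟩ := hf
    obtain ⟨q, hq⟩ := hg
    exact ⟨p * q, by simp [hp, hq]⟩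

lemma van_sum {ι : Type} (d s : ℕ) (F : Module.Dual K (Hd K 2 d) → K)
    (hF : ∀ Q ∈ {Q : PN K 2 d | ∃ S : Finset (PN K 2 d), ↑S ⊆ XSet K 2 d ∧ S.card ≤ s ∧
      Q.rep ∈ Submodule.span K (Projectivization.rep '' (S : Set (PN K 2 d)))}, ∀ c : K, F (c • Q.rep) = 0)
    (hs : 0 < s)
    (T : Finset ι) (hT : T.card ≤ s) (c : ι → K) (v : ι → Fin 3 → K) (hv : ∀ i, v i ≠ 0) :
    F (∑ i ∈ T, c i • nu d (v i)) = 0 := by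
  by_cases h0 : ∑ i ∈ T, c i • nu d (v i) = 0
  · rw [h0]
    have hv1 : (fun _ => 1 : Fin 3 → K) ≠ 0 := by intro h; simpa using congrFun h 0
    obtain ⟨S, h1, h2, h3⟩ := to_span d ({()} : Finset Unit) (fun _ => (1:K)) (fun _ => (fun _ => 1 : Fin 3 → K)) (fun _ _ => hv1)
    have hq := nu_ne d _ hv1
    have := hF (Projectivization.mk K _ hq) ⟨S, h1, h2.trans (by simp; omega), by
      obtain ⟨u, hu⟩ := Projectivization.exists_smul_eq_mk_rep K _ hq
      rw [← hu, Units.smul_def]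
      apply Submodule.smul_mem
      simpa using h3⟩ 0
    simpa using this
  · obtain ⟨S, h1, h2, h3⟩ := to_span d T c v (fun i _ => hv i)
    obtain ⟨u, hu⟩ := Projectivization.exists_smul_eq_mk_rep K _ h0
    have := hF (Projectivization.mk K _ h0) ⟨S, h1, h2.trans hT, by
      rw [← hu, Units.smul_def]
      exact Submodule.smul_mem _ _ h3⟩ ((u⁻¹ : Kˣ) : K)
    rwa [← hu, ← Units.smul_def, inv_smul_smul] at this

lemma br_up [IsAlgClosed K] [CharZero K] {a b : Fin 3 → Fin 3 → K} (h : DB a b) (w d : ℕ) (hw : 3 ≤ w)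
    (hd : 4 * w ≤ d + 1) (P : PN K 2 d)
    (hk : ∀ m : Fin 3 →₀ ℕ, m.degree = d → UU w w m → pull a d P.rep (monomial m 1) = 0) :
    P ∈ secantWrt (XSet K 2 d) (2 * w) := by
  intro F hF hz c
  haveI : NeZero (w : K) := ⟨by have : w ≠ 0 := by omega
                                exact_mod_cast this⟩
  obtain ⟨ζ, hζ⟩ := HasEnoughRootsOfUnity.exists_primitiveRoot K w
  have hP := decomp h w d hw hd P.rep hk
  rw [← gam_zero b d w (by omega) (by omega)] at hP
  obtain ⟨p, hp⟩ := poly_curve b d w (lc a d P.rep 0 1) (lc a d P.rep 2 0) c F hF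
  rw [hP, hp]
  have hp0 : p = 0 := by
    apply Polynomial.eq_zero_of_infinite_isRoot
    apply Set.Infinite.mono (s := {0}ᶜ)
    · intro t ht
      have ht' : t ≠ 0 := ht
      show p.eval t = 0
      rw [← hp]
      obtain ⟨C, v, hv, he⟩ := gam_sum h d w w (by omega) (by omega) ζ ζ hζ hζ
        (lc a d P.rep 0 1) (lc a d P.rep 2 0) t ht'
      unfold gam
      rw [he, Finset.smul_sum]
      simp only [smul_smul]
      exact van_sum d (2 * w) F hz (by omega) _ (by simp; omega) (fun i => c * C i) v hv
    · exact (Set.finite_singleton (0:K)).infinite_compl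
  rw [hp0]; simp

/-- row exponents -/
noncomputable def fe (w : ℕ) : Fin w ⊕ Fin w → (Fin 3 →₀ ℕ)
  | Sum.inl i => mm 0 1 w i
  | Sum.inr j => mm 2 0 w j

/-- column exponents -/
noncomputable def ge (w d : ℕ) : Fin w ⊕ Fin w → (Fin 3 →₀ ℕ)
  | Sum.inl i => mm 0 1 (d - w) (w - 1 - i)
  | Sum.inr j => mm 2 0 (d - w) (w - 1 - j)

lemma deg_mm (i0 i1 : Fin 3) (d n : ℕ) (h : n ≤ d) : (mm i0 i1 d n).degree = d := by
  simp only [mm, map_add, Finsupp.degree_single]; omega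

lemma deg_fe (w : ℕ) (p : Fin w ⊕ Fin w) : (fe w p).degree = w := by
  rcases p with i | i <;> exact deg_mm _ _ _ _ i.2.le

lemma deg_ge (w d : ℕ) (hd : 4 * w ≤ d + 1) (p : Fin w ⊕ Fin w) : (ge w d p).degree = d - w := by
  rcases p with i | i <;> exact deg_mm _ _ _ _ (by have := i.2; omega)

/-- catalecticant -/
noncomputable def Mat (a : Fin 3 → Fin 3 → K) (w d : ℕ) (φ : Module.Dual K (Hd K 2 d)) :
    Matrix (Fin w ⊕ Fin w) (Fin w ⊕ Fin w) K :=
  fun p q => pull a d φ (monomial (fe w p + ge w d q) 1)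

lemma mm_add (i0 i1 : Fin 3) (d n d' n' : ℕ) (h : n ≤ d) (h' : n' ≤ d') :
    mm i0 i1 d n + mm i0 i1 d' n' = mm i0 i1 (d + d') (n + n') := by
  unfold mm
  rw [show d + d' - (n + n') = (d - n) + (d' - n') by omega, Finsupp.single_add, Finsupp.single_add]
  abel

lemma det_ne {a : Fin 3 → Fin 3 → K} (w d : ℕ) (hw : 3 ≤ w)
    (hd : 4 * w ≤ d + 1) (φ : Module.Dual K (Hd K 2 d))
    (hk : ∀ m : Fin 3 →₀ ℕ, m.degree = d → UU w w m → pull a d φ (monomial m 1) = 0)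
    (h1 : pull a d φ (X 0 ^ (d + 1 - w) * X 1 ^ (w - 1)) ≠ 0)
    (h2 : pull a d φ (X 2 ^ (d + 1 - w) * X 0 ^ (w - 1)) ≠ 0) : (Mat a w d φ).det ≠ 0 := by
  have hdeg : ∀ p q, (fe w p + ge w d q).degree = d := by
    intro p q; rw [map_add, deg_fe, deg_ge w d hd]; omega
  have e12 : (Mat a w d φ).toBlocks₁₂ = 0 := by
    ext i j
    apply hk _ (hdeg _ _)
    have := i.2; have := j.2
    simp [fe, ge, UU, Um, mm]; omega
  rw [← Matrix.fromBlocks_toBlocks (Mat a w d φ), e12, Matrix.det_fromBlocks_zero₁₂]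
  apply mul_ne_zero
  · rw [Matrix.det_of_isUpperTriangular]
    · rw [Finset.prod_ne_zero_iff]
      intro i _
      show pull a d φ (monomial (fe w (Sum.inl i) + ge w d (Sum.inl i)) 1) ≠ 0
      have := i.2
      simp only [fe, ge]
      rw [mm_add _ _ _ _ _ _ (by omega) (by omega), show i.1 + (w - 1 - i.1) = w - 1 by omega,
        show w + (d - w) = d by omega]
      rw [XX] at h1
      unfold mm
      rwa [show d - (w - 1) = d + 1 - w by omega]
    · intro i j hij
      apply hk _ (hdeg _ _)
      have := i.2; have := j.2
      have : j.1 < i.1 := hij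
      simp [fe, ge, UU, Um, mm]; omega
  · rw [Matrix.det_of_isUpperTriangular]
    · rw [Finset.prod_ne_zero_iff]
      intro i _
      show pull a d φ (monomial (fe w (Sum.inr i) + ge w d (Sum.inr i)) 1) ≠ 0
      have := i.2
      simp only [fe, ge]
      rw [mm_add _ _ _ _ _ _ (by omega) (by omega), show i.1 + (w - 1 - i.1) = w - 1 by omega,
        show w + (d - w) = d by omega]
      rw [XX] at h2
      unfold mm
      rwa [show d - (w - 1) = d + 1 - w by omega]
    · intro i j hij
      apply hk _ (hdeg _ _)
      have := i.2; have := j.2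
      have : j.1 < i.1 := hij
      simp [fe, ge, UU, Um, mm]; omega

lemma det_poly (a : Fin 3 → Fin 3 → K) (w d : ℕ) :
    (fun φ => (Mat a w d φ).det) ∈ polyFunctions K (Module.Dual K (Hd K 2 d)) := by
  have : (fun φ => (Mat a w d φ).det) = ∑ σ : Equiv.Perm (Fin w ⊕ Fin w),
      Equiv.Perm.sign σ • ∏ i, (fun φ : Module.Dual K (Hd K 2 d) => Mat a w d φ (σ i) i) := by
    ext φ
    rw [Matrix.det_apply]
    simp [Finset.sum_apply, Finset.prod_apply, Units.smul_def]
  rw [this]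
  apply Subalgebra.sum_mem
  intro σ _
  rw [Units.smul_def]
  apply Subalgebra.zsmul_mem
  apply Subalgebra.prod_mem
  intro i _
  apply Algebra.subset_adjoin
  refine ⟨LinearMap.applyₗ (hproj d (sub a (monomial (fe w (σ i) + ge w d i) 1))), ?_⟩
  ext φ; rfl

lemma det_zero {ι : Type} (a : Fin 3 → Fin 3 → K) (w d : ℕ) (hd : 4 * w ≤ d + 1) (S : Finset ι)
    (hS : S.card < 2 * w) (c : ι → K) (v : ι → Fin 3 → K) :
    (Mat a w d (∑ i ∈ S, c i • nu d (v i))).det = 0 := by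
  classical
  have hdeg : ∀ p q, (fe w p + ge w d q).degree = d := by
    intro p q; rw [map_add, deg_fe, deg_ge w d hd]
    rcases p with i | i <;> (have := i.2; omega)
  let A : Matrix (Fin w ⊕ Fin w) S K := fun p i =>
    c i * eval (fun k => ∑ j, a k j * v i j) (monomial (fe w p) 1)
  let B : Matrix S (Fin w ⊕ Fin w) K := fun i q =>
    eval (fun k => ∑ j, a k j * v i j) (monomial (ge w d q) 1)
  have hM : Mat a w d (∑ i ∈ S, c i • nu d (v i)) = A * B := by
    ext p q
    rw [Matrix.mul_apply]
    unfold Mat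
    rw [pull_nu _ _ _ _ _ _ (isHomogeneous_monomial _ (hdeg p q)), Psi_apply, ← Finset.sum_coe_sort]
    apply Finset.sum_congr rfl
    intro i _
    simp only [A, B]
    rw [mul_assoc, ← map_mul, monomial_mul, mul_one]
  by_contra hne
  have hu : IsUnit (A * B) := by
    rw [← hM, Matrix.isUnit_iff_isUnit_det]; exact isUnit_iff_ne_zero.mpr hne
  have h1 := Matrix.rank_of_isUnit _ hu
  have h2 := Matrix.rank_mul_le_left A B
  have h3 := Matrix.rank_le_card_width A
  simp at h1 h3
  omega

lemma br_low {a : Fin 3 → Fin 3 → K} (w d : ℕ) (hw : 3 ≤ w)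
    (hd : 4 * w ≤ d + 1) (P : PN K 2 d)
    (hk : ∀ m : Fin 3 →₀ ℕ, m.degree = d → UU w w m → pull a d P.rep (monomial m 1) = 0)
    (h1 : pull a d P.rep (X 0 ^ (d + 1 - w) * X 1 ^ (w - 1)) ≠ 0)
    (h2 : pull a d P.rep (X 2 ^ (d + 1 - w) * X 0 ^ (w - 1)) ≠ 0) (s : ℕ)
    (hs : P ∈ secantWrt (XSet K 2 d) s) : 2 * w ≤ s := by
  by_contra hlt
  have := hs _ (det_poly a w d) (by
    rintro Q ⟨S, hS, hcard, hQ⟩ c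
    obtain ⟨e, v, _, he⟩ := of_span d S hS _ hQ
    rw [he, Finset.smul_sum]
    simp only [smul_smul]
    exact det_zero a w d hd S (by omega) (fun i => c * e i) v) 1
  rw [one_smul] at this
  exact det_ne w d hw hd P.rep hk h1 h2 this

end border
end V8

namespace V8
open MvPolynomial

section final
variable {K : Type} [Field K]

lemma exists_prim [IsAlgClosed K] [CharZero K] (N : ℕ) (hN : 0 < N) : ∃ ζ : K, IsPrimitiveRoot ζ N := by
  have : NeZero (N : K) := ⟨by have : N ≠ 0 := by omega
                               exact_mod_cast this⟩
  exact HasEnoughRootsOfUnity.exists_primitiveRoot K N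

lemma sr_nonempty [IsAlgClosed K] [CharZero K] {a b : Fin 3 → Fin 3 → K} (h : DB a b) (w d : ℕ)
    (hw : 3 ≤ w) (hd : 4 * w ≤ d + 1) (P : PN K 2 d)
    (hk : ∀ m : Fin 3 →₀ ℕ, m.degree = d → UU w w m → pull a d P.rep (monomial m 1) = 0) :
    ∃ S : Finset (PN K 2 d), ↑S ⊆ XSet K 2 d ∧ S.card = srank d P ∧
    P.rep ∈ Submodule.span K (Projectivization.rep '' (S : Set (PN K 2 d))) := by
  apply Nat.sInf_mem (s := {r | ∃ S : Finset (PN K 2 d), ↑S ⊆ XSet K 2 d ∧ S.card = r ∧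
    P.rep ∈ Submodule.span K (Projectivization.rep '' (S : Set (PN K 2 d)))})
  obtain ⟨ζ, hζ⟩ := exists_prim (K := K) (d + 1) (by omega)
  have hP := decomp h w d hw hd P.rep hk
  obtain ⟨c, v, hv, he⟩ := gam_sum h d (d + 1) (d + 1) (by omega) (by omega) ζ ζ hζ hζ
    (fun n => if n < w then lc a d P.rep 0 1 n else 0) (fun n => if n < w then lc a d P.rep 2 0 n else 0) 1 one_ne_zero
  obtain ⟨S, h1, h2, h3⟩ := to_span d _ c v (fun i (_ : i ∈ (Finset.range (d+1)).disjSum (Finset.range (d+1))) => hv i)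
  refine ⟨S.card, S, h1, rfl, ?_⟩
  rw [← he] at h3
  convert h3 using 1
  rw [hP]
  congr 1
  all_goals
    apply Finset.sum_subset_zero_on_sdiff
    · intro n hn; simp at hn ⊢; omega
    · intro n hn
      simp only [Finset.mem_sdiff, Finset.mem_range] at hn
      rw [Nat.mod_eq_of_lt hn.1, if_neg hn.2, mul_zero, zero_smul]
    · intro n hn
      have hn' := Finset.mem_range.mp hn
      rw [← hP, Nat.mod_eq_of_lt (by omega), if_pos hn', one_pow, one_mul]

lemma part1 [IsAlgClosed K] [CharZero K] {a b : Fin 3 → Fin 3 → K} (h : DB a b) (w d : ℕ)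
    (hw : 3 ≤ w) (hd : 4 * w ≤ d + 1) (P : PN K 2 d)
    (hk : ∀ m : Fin 3 →₀ ℕ, m.degree = d → UU w w m → pull a d P.rep (monomial m 1) = 0)
    (h1 : pull a d P.rep (X 0 ^ (d + 1 - w) * X 1 ^ (w - 1)) ≠ 0)
    (h2 : pull a d P.rep (X 2 ^ (d + 1 - w) * X 0 ^ (w - 1)) ≠ 0) :
    brank d P = 2 * w ∧ 2 * d + 3 ≤ srank d P + 2 * w := by
  constructor
  · apply le_antisymm
    · apply Nat.sInf_le
      exact ⟨by omega, br_up h w d hw hd P hk⟩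
    · apply le_csInf
      · exact ⟨2 * w, by omega, br_up h w d hw hd P hk⟩
      · rintro s ⟨_, hs⟩
        exact br_low w d hw hd P hk h1 h2 s hs
  · obtain ⟨S, hS, hc, hP⟩ := sr_nonempty h w d hw hd P hk
    rw [← hc]
    exact rank_low h w d hw hd P.rep hk h1 h2 S hS hP

/-- the example -/
noncomputable def exφ (b : Fin 3 → Fin 3 → K) (w d : ℕ) : Module.Dual K (Hd K 2 d) :=
  cf b 0 1 d (w - 1) + (cf b 2 0 d (w - 1) + cf b 2 0 d d)

lemma pull_ex {a b : Fin 3 → Fin 3 → K} (h : DB a b) (w d : ℕ) (g : MvPolynomial (Fin 3) K)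
    (hg : g.IsHomogeneous d) : pull a d (exφ b w d) g =
    coeff (mm 0 1 d (w - 1)) g + (coeff (mm 2 0 d (w - 1)) g + coeff (mm 2 0 d d) g) := by
  rw [pull_hom _ _ _ _ hg]
  simp only [exφ, LinearMap.add_apply, cf_apply, sub_sub' h]

lemma ex_kill {a b : Fin 3 → Fin 3 → K} (h : DB a b) (w d : ℕ) (hw : 3 ≤ w) (hd : 4 * w ≤ d + 1)
    (m : Fin 3 →₀ ℕ) (hm : m.degree = d) (hU : UU w w m) :
    pull a d (exφ b w d) (monomial m 1) = 0 := by
  classical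
  rw [pull_ex h w d _ (isHomogeneous_monomial _ hm)]
  simp only [coeff_monomial]
  rw [if_neg, if_neg, if_neg, add_zero, add_zero]
  all_goals
    rintro rfl
    revert hU
    simp [UU, Um, mm]
    omega

lemma ex_1 {a b : Fin 3 → Fin 3 → K} (h : DB a b) (w d : ℕ) (hw : 3 ≤ w) (hd : 4 * w ≤ d + 1) :
    pull a d (exφ b w d) (X 0 ^ (d + 1 - w) * X 1 ^ (w - 1)) = 1 := by
  classical
  rw [pull_ex h w d _ (hom_mm _ _ _ _ _ (by omega)), XX]
  simp only [coeff_monomial]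
  rw [if_pos, if_neg, if_neg, add_zero, add_zero]
  · intro he
    have := DFunLike.congr_fun he 1
    simp [mm] at this; omega
  · intro he
    have := DFunLike.congr_fun he 1
    simp [mm] at this; omega
  · unfold mm; rw [show d - (w - 1) = d + 1 - w by omega]

lemma ex_2 {a b : Fin 3 → Fin 3 → K} (h : DB a b) (w d : ℕ) (hw : 3 ≤ w) (hd : 4 * w ≤ d + 1) :
    pull a d (exφ b w d) (X 2 ^ (d + 1 - w) * X 0 ^ (w - 1)) = 1 := by
  classical
  rw [pull_ex h w d _ (hom_mm _ _ _ _ _ (by omega)), XX]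
  simp only [coeff_monomial]
  rw [if_neg, if_pos, if_neg, add_zero, zero_add]
  · intro he
    have := DFunLike.congr_fun he 2
    simp [mm] at this; omega
  · unfold mm; rw [show d - (w - 1) = d + 1 - w by omega]
  · intro he
    have := DFunLike.congr_fun he 1
    simp [mm] at this; omega

lemma ex_span [IsAlgClosed K] [CharZero K] {a b : Fin 3 → Fin 3 → K} (h : DB a b) (w d : ℕ)
    (hw : 3 ≤ w) (hd : 4 * w ≤ d + 1) :
    ∃ S : Finset (PN K 2 d), ↑S ⊆ XSet K 2 d ∧ S.card ≤ 2 * d + 3 - 2 * w ∧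
    exφ b w d ∈ Submodule.span K (Projectivization.rep '' (S : Set (PN K 2 d))) := by
  obtain ⟨ζ, hζ⟩ := exists_prim (K := K) (d + 2 - w) (by omega)
  obtain ⟨η, hη⟩ := exists_prim (K := K) (d + 1 - w) (by omega)
  obtain ⟨c, v, hv, he⟩ := gam_sum h d (d + 2 - w) (d + 1 - w) (by omega) (by omega) ζ η hζ hη
    (fun n => if n = w - 1 then 1 else 0) (fun n => if n = w - 1 then 1 else 0) 1 one_ne_zero
  obtain ⟨S, h1, h2, h3⟩ := to_span d _ c v (fun i (_ : i ∈ (Finset.range (d+2-w)).disjSum (Finset.range (d+1-w))) => hv i)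
  refine ⟨S, h1, h2.trans (by simp; omega), ?_⟩
  rw [← he] at h3
  convert h3 using 1
  unfold exφ
  congr 1
  · rw [Finset.sum_eq_single (w - 1)]
    · rw [Nat.mod_eq_of_lt (by omega)]; simp
    · intro n hn hne
      have hn' := Finset.mem_range.mp hn
      rw [if_neg]
      · simp
      · by_cases hlt : n < d + 2 - w
        · rwa [Nat.mod_eq_of_lt hlt]
        · rw [Nat.mod_eq_sub_mod (by omega), Nat.mod_eq_of_lt (by omega)]
          omega
    · intro hn; simp at hn; omega
  · rw [← Finset.sum_subset (s₁ := {w - 1, d})]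
    · rw [Finset.sum_pair (by omega), Nat.mod_eq_of_lt (by omega : w - 1 < d + 1 - w),
        Nat.mod_eq_sub_mod (by omega : d + 1 - w ≤ d), Nat.mod_eq_of_lt (by omega : d - (d + 1 - w) < d + 1 - w),
        show d - (d + 1 - w) = w - 1 by omega]
      simp
    · intro n hn; simp at hn ⊢; omega
    · intro n hn hne
      have hn' := Finset.mem_range.mp hn
      simp only [Finset.mem_insert, Finset.mem_singleton] at hne
      rw [if_neg]
      · simp
      · by_cases hlt : n < d + 1 - w
        · rw [Nat.mod_eq_of_lt hlt]; omega
        · rw [Nat.mod_eq_sub_mod (by omega), Nat.mod_eq_of_lt (by omega)]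
          omega

end final
end V8

/-- Lemma 6 (`o1`): in `ℙ^2`, with `w ≥ 3`, `d ≥ 4w-1`, distinct lines `L₁, L₂` meeting at
`O`, `A₁ ⊂ L₁` the degree-`w` divisor supported at `O`, `A₂ ⊂ L₂` the degree-`w` divisor
supported at `O₂ ∈ L₂ ∖ {O}`, and `A = A₁ ∪ A₂`: every `P ∈ ⟨ν_d(A)⟩` not in the span of any
proper subscheme has `br(P) = 2w` and `sr(P) ≥ 2d+3-2w`, and such a `P` with
`sr(P) = 2d+3-2w` exists. -/
theorem stmt8 (K : Type) [Field K] [IsAlgClosed K] [CharZero K]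
    (w d : ℕ) (hw : 3 ≤ w) (hd : 4 * w ≤ d + 1)
    (L1 L2 : Set (Pm K 2)) (hL1 : IsLine L1) (hL2 : IsLine L2) (hne : L1 ≠ L2)
    (O : Pm K 2) (hO : L1 ∩ L2 = {O})
    (A1 : PSub K 2) (hA1L : idealOfSet L1 ≤ A1.I) (hA1z : IsZeroDimI A1.I)
    (hA1deg : idealDeg A1.I = w) (hA1sup : pzeroLocus A1.I = {O})
    (O2 : Pm K 2) (hO2 : O2 ∈ L2) (hO2O : O2 ≠ O)
    (A2 : PSub K 2) (hA2L : idealOfSet L2 ≤ A2.I) (hA2z : IsZeroDimI A2.I)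
    (hA2deg : idealDeg A2.I = w) (hA2sup : pzeroLocus A2.I = {O2}) :
    (∀ P : PN K 2 d, inSpanI (A1.I ⊓ A2.I) d P →
      (∀ A' : PSub K 2, A1.I ⊓ A2.I < A'.I → ¬ inSpanI A'.I d P) →
      brank d P = 2 * w ∧ 2 * d + 3 ≤ srank d P + 2 * w) ∧
    ∃ P : PN K 2 d, inSpanI (A1.I ⊓ A2.I) d P ∧
      (∀ A' : PSub K 2, A1.I ⊓ A2.I < A'.I → ¬ inSpanI A'.I d P) ∧
      srank d P + 2 * w = 2 * d + 3 := by
  open V8 MvPolynomial in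
  obtain ⟨a, b, h, hb0, hb2, hl1, hl2⟩ := V8.setup L1 L2 hL1 hL2 O hO O2 hO2 hO2O
  have hI1 := V8.ideal_id h A1 L1 hA1L O hA1sup w hA1deg 0 1 2 (by decide) (by decide) (by decide) hb0 hl1
  have hI2 := V8.ideal_id h A2 L2 hA2L O2 hA2sup w hA2deg 2 0 1 (by decide) (by decide) (by decide) hb2 hl2
  have hI : ∀ f, V8.sub a f ∈ A1.I ⊓ A2.I ↔ ∀ m ∈ f.support, V8.UU w w m := by
    intro f
    rw [Submodule.mem_inf, hI1, hI2]
    exact ⟨fun ⟨p, q⟩ m hm => ⟨p m hm, q m hm⟩, fun p => ⟨fun m hm => (p m hm).1, fun m hm => (p m hm).2⟩⟩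
  constructor
  · intro P hP hmin
    obtain ⟨h1, h2⟩ := V8.H1_of_min h _ w d hw hd hI P.rep hP hmin
    exact V8.part1 h w d hw hd P (V8.kill_of_mem h _ w d hI P.rep hP) h1 h2
  · have hφ0 : V8.exφ b w d ≠ 0 := by
      intro h0
      have := V8.ex_1 h w d hw hd
      rw [h0] at this
      simp [V8.pull] at this
    obtain ⟨u, hu⟩ := Projectivization.exists_smul_eq_mk_rep K _ hφ0
    set P : PN K 2 d := Projectivization.mk K _ hφ0 with hP
    have hpull : ∀ g, V8.pull a d P.rep g = u * V8.pull a d (V8.exφ b w d) g := by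
      intro g; rw [← hu]; simp [V8.pull, Units.smul_def]
    have hk : ∀ m : Fin 3 →₀ ℕ, m.degree = d → V8.UU w w m →
        V8.pull a d P.rep (MvPolynomial.monomial m 1) = 0 := by
      intro m hm hU
      rw [hpull, V8.ex_kill h w d hw hd m hm hU, mul_zero]
    have h1 := hpull (MvPolynomial.X 0 ^ (d + 1 - w) * MvPolynomial.X 1 ^ (w - 1))
    have h2 := hpull (MvPolynomial.X 2 ^ (d + 1 - w) * MvPolynomial.X 0 ^ (w - 1))
    rw [V8.ex_1 h w d hw hd, mul_one] at h1
    rw [V8.ex_2 h w d hw hd, mul_one] at h2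
    have h1' := h1.trans_ne u.ne_zero
    have h2' := h2.trans_ne u.ne_zero
    refine ⟨P, ?_, fun A' hA' => V8.min_ex h _ w d hw hd hI P.rep h1' h2' A' hA', ?_⟩
    · intro f hf
      have hfh : (V8.sub (fun j i => b i j) f.1).IsHomogeneous d := V8.sub_hom _ f.2
      rw [← V8.sub_sub h f.1, hI] at hf
      have h3 := V8.pull_supp a d P.rep (V8.UU w w) hk _ hfh hf
      rw [V8.pull_hom _ _ _ _ hfh] at h3
      rw [← h3]
      congr 1
      apply Subtype.ext
      exact (V8.sub_sub h f.1).symm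
    · have hlow := (V8.part1 h w d hw hd P hk h1' h2').2
      obtain ⟨S, hS, hc, hs⟩ := V8.ex_span h w d hw hd
      have hup : srank d P ≤ S.card := by
        apply Nat.sInf_le
        refine ⟨S, hS, rfl, ?_⟩
        rw [← hu, Units.smul_def]
        exact Submodule.smul_mem _ _ hs
      omega
end
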